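/- arXiv:math/0304172 — 2 statements merged into one kernel-verified Lean document; each statement's English description precedes it below -/
import Mathlib

section
/- Let R = R' ⊕ O(p^ξ e_n + v) be a lattice in K^n with R' ⊂ K^{n-1} a lattice, ξ ∈ Z, v ∈ K^{n-1}. Define ν ≥ 0 as the smallest non-negative integer k with p^k v ∈ R' + O^{n-1} (so ν = 0 if v ∈ R' + O^{n-1}). Then vol(R ∩ O^n)/vol(R ∩ O^{n-1}) = p^{−max(0, ξ+ν)}. -/
/-!
Both volumes are reciprocals of indices: a closed subgroup `L` of finite index in the compact group
`O^n` tiles it by `[O^n : L]` translates, so `[O^n : L] * vol L = 1` (`relIndex_mul_measure`). Put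
`L = R ∩ O^n`, `L₀ = R ∩ O^{n-1}` and `M = max(0, ξ + ν)`; it remains to show
`[O^n : L] = [O^{n-1} : L₀] * p^M`.

The projection of `L` to the last coordinate is exactly `p^M O`. Indeed `r' + c (p^ξ e_n + v)` with
`r' ∈ R'` and `c` of valuation `k` lies in `O^n` only if `k + ξ ≥ 0` and `c v ∈ R' + O^{n-1}`, that
is `k ≥ ν` (`norm_last_le`), and conversely a suitable `r'` exists once both hold
(`exists_last_eq`). Then `L + O^{n-1}` is the set of vectors of `O^n` with last coordinate in
`p^M O`, and the index splits along `L ≤ L + O^{n-1} ≤ O^n` (`relIndex_stdLat`), where the first step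
has index `[O^{n-1} : L₀]` and the second `[O : p^M O] = p^M` (`padicPow_relIndex`). Finiteness of
`[O^{n-1} : L₀]` holds because `R'` is open in `K^{n-1}`.
-/


open MeasureTheory

noncomputable section

instance (p : ℕ) [Fact p.Prime] : MeasurableSpace ℚ_[p] := borel _

/-- The standard lattice `ℤ_p^n ⊂ ℚ_p^n`. -/
def stdLat (p n : ℕ) [Fact p.Prime] : Submodule ℤ_[p] (Fin n → ℚ_[p]) :=
  Submodule.pi Set.univ fun _ => 1

/-- A lattice in `ℚ_p^n` is a compact open `ℤ_p`-submodule. -/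
def IsLattice {p n : ℕ} [Fact p.Prime] (R : Submodule ℤ_[p] (Fin n → ℚ_[p])) : Prop :=
  IsCompact (R : Set (Fin n → ℚ_[p])) ∧ IsOpen (R : Set (Fin n → ℚ_[p]))

/-- The coordinate hyperplane `K^{n-1} = {x : x_{last} = 0}` inside `ℚ_p^{m+1}`,
viewed as a `ℤ_p`-submodule. -/
def Kpred (p m : ℕ) [Fact p.Prime] : Submodule ℤ_[p] (Fin (m + 1) → ℚ_[p]) :=
  LinearMap.ker ((LinearMap.proj (Fin.last m) :
    (Fin (m + 1) → ℚ_[p]) →ₗ[ℤ_[p]] ℚ_[p]))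

/-- `R'` is a lattice in the subspace `W`: it is contained in `W`, compact, and open
in the subspace topology of `W`. -/
def IsLatticeWithin {p n : ℕ} [Fact p.Prime] (W R' : Submodule ℤ_[p] (Fin n → ℚ_[p])) : Prop :=
  R' ≤ W ∧ IsCompact (R' : Set (Fin n → ℚ_[p])) ∧
    IsOpen (Subtype.val ⁻¹' (R' : Set (Fin n → ℚ_[p])) : Set W)

/-- The vector `p^ξ e_n + v`. -/
def genVec (p m : ℕ) [Fact p.Prime] (ξ : ℤ) (v : Fin (m + 1) → ℚ_[p]) :
    Fin (m + 1) → ℚ_[p] :=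
  Pi.single (Fin.last m) ((p : ℚ_[p]) ^ ξ) + v

/-- The subset of `ℚ_p^j = K^j` corresponding to `A ∩ K^j`, where `K^j ⊆ ℚ_p^n` is the
span of the first `j` standard basis vectors. -/
def restrictSet (p : ℕ) [Fact p.Prime] {n : ℕ} (j : ℕ) (A : Set (Fin n → ℚ_[p])) :
    Set (Fin j → ℚ_[p]) :=
  {y | (fun i : Fin n => if h : (i : ℕ) < j then y ⟨i, h⟩ else 0) ∈ A}
section Measure

/-- The subgroup version of `AddSubgroup.index_mul_measure`: a subgroup `H` of finite relative
index in `S` tiles `S` by `[S : H]` translates of itself. -/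
lemma relIndex_mul_measure {G : Type*} [AddGroup G] [MeasurableSpace G] [MeasurableAdd G]
    (μ : Measure G) [μ.IsAddLeftInvariant] (H S : AddSubgroup G) (hHS : H ≤ S)
    (hH : MeasurableSet (H : Set G)) (hS : MeasurableSet (S : Set G))
    (hfin : H.relIndex S ≠ 0) :
    (H.relIndex S : ENNReal) * μ H = μ S := by
  have : MeasurableAdd S :=
    ⟨fun c => (measurable_subtype_coe.const_add (c : G)).subtype_mk,
      fun c => (measurable_subtype_coe.add_const (c : G)).subtype_mk⟩
  have hinv : (μ.comap ((↑) : S → G)).IsAddLeftInvariant :=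
    Measure.IsAddLeftInvariant.comap (f := S.subtype) μ (MeasurableEmbedding.subtype_coe hS)
  have : (H.addSubgroupOf S).FiniteIndex := ⟨hfin⟩
  have key := AddSubgroup.index_mul_measure (H.addSubgroupOf S)
    (measurable_subtype_coe hH) (μ.comap ((↑) : S → G))
  have hemb : MeasurableEmbedding ((↑) : S → G) := MeasurableEmbedding.subtype_coe hS
  rw [hemb.comap_apply, hemb.comap_apply] at key
  have e1 : ((↑) : S → G) '' (H.addSubgroupOf S : Set S) = H := by
    ext x
    simp only [Set.mem_image, SetLike.mem_coe, AddSubgroup.mem_addSubgroupOf]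
    exact ⟨fun ⟨y, hy, hyx⟩ => hyx ▸ hy, fun hx => ⟨⟨x, hHS hx⟩, hx, rfl⟩⟩
  have e2 : ((↑) : S → G) '' Set.univ = S := by
    rw [Set.image_univ]
    exact Subtype.range_coe
  rwa [e1, e2] at key

end Measure

section Padic

variable {p : ℕ} [Fact p.Prime]

instance : BorelSpace ℚ_[p] := ⟨rfl⟩

lemma mem_stdLat {n : ℕ} {x : Fin n → ℚ_[p]} : x ∈ stdLat p n ↔ ∀ i, ‖x i‖ ≤ 1 := by
  simp only [stdLat, Submodule.mem_pi, Set.mem_univ, forall_const, Submodule.mem_one,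
    PadicInt.algebraMap_apply]
  exact forall_congr' fun i =>
    ⟨fun ⟨y, hy⟩ => hy ▸ y.2, fun h => ⟨⟨x i, h⟩, rfl⟩⟩

lemma mem_Kpred {m : ℕ} {x : Fin (m + 1) → ℚ_[p]} :
    x ∈ Kpred p m ↔ x (Fin.last m) = 0 := Iff.rfl

lemma padicInt_smul_def (c : ℤ_[p]) (x : ℚ_[p]) : c • x = (c : ℚ_[p]) * x := rfl

lemma natCast_pow_smul {n : ℕ} (k : ℕ) (v : Fin n → ℚ_[p]) :
    (p : ℚ_[p]) ^ k • v = (p : ℤ_[p]) ^ k • v := by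
  ext i
  simp [padicInt_smul_def]

lemma isCompact_stdLat (n : ℕ) : IsCompact (stdLat p n : Set (Fin n → ℚ_[p])) := by
  have : (stdLat p n : Set (Fin n → ℚ_[p]))
      = Set.univ.pi fun _ => Metric.closedBall (0 : ℚ_[p]) 1 := by
    ext x
    simp [mem_stdLat]
  rw [this]
  exact isCompact_univ_pi fun _ => isCompact_closedBall _ _

lemma isCompact_span_singleton {n : ℕ} (g : Fin n → ℚ_[p]) :
    IsCompact (Submodule.span ℤ_[p] {g} : Set (Fin n → ℚ_[p])) := by
  have : (Submodule.span ℤ_[p] {g} : Set (Fin n → ℚ_[p]))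
      = Set.range fun c : ℤ_[p] => c • g := by
    ext x
    simp [Submodule.mem_span_singleton]
  rw [this]
  refine isCompact_range (continuous_pi fun i => ?_)
  exact continuous_subtype_val.mul continuous_const

/-- The subgroup `p^M ℤ_p` of `ℚ_p`, as a closed ball. -/
def padicPow (p : ℕ) [Fact p.Prime] (M : ℕ) : AddSubgroup ℚ_[p] where
  carrier := {x | ‖x‖ ≤ (p : ℝ) ^ (-M : ℤ)}
  zero_mem' := by
    change ‖(0 : ℚ_[p])‖ ≤ _
    rw [norm_zero]
    positivity
  add_mem' := fun {a b} ha hb => (Padic.nonarchimedean a b).trans (max_le ha hb)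
  neg_mem' := fun {a} ha => by simpa using ha

lemma mem_padicPow {M : ℕ} {x : ℚ_[p]} : x ∈ padicPow p M ↔ ‖x‖ ≤ (p : ℝ) ^ (-M : ℤ) := Iff.rfl

lemma padicPow_relIndex (M : ℕ) : (padicPow p M).relIndex (padicPow p 0) = p ^ M := by
  have hrange : padicPow p 0 = AddSubgroup.map (PadicInt.Coe.ringHom (p := p)).toAddMonoidHom ⊤ := by
    ext x
    simp only [mem_padicPow, AddSubgroup.mem_map, AddSubgroup.mem_top, true_and]
    constructor
    · intro h
      exact ⟨⟨x, by simpa using h⟩, rfl⟩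
    · rintro ⟨y, rfl⟩
      simp only [Nat.cast_zero, neg_zero, zpow_zero]
      exact y.2
  rw [hrange, ← AddSubgroup.relIndex_comap, AddSubgroup.relIndex_top_right]
  have hker : (padicPow p M).comap (PadicInt.Coe.ringHom (p := p)).toAddMonoidHom
      = (PadicInt.toZModPow (p := p) M).toAddMonoidHom.ker := by
    ext x
    have h1 : x ∈ (PadicInt.toZModPow (p := p) M).toAddMonoidHom.ker
        ↔ x ∈ RingHom.ker (PadicInt.toZModPow (p := p) M) := Iff.rfl
    rw [h1, PadicInt.ker_toZModPow, ← PadicInt.norm_le_pow_iff_mem_span_pow]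
    rfl
  have hsurj : Function.Surjective (PadicInt.toZModPow (p := p) M) :=
    ZMod.ringHom_surjective _
  rw [hker, AddSubgroup.index_ker, AddMonoidHom.range_eq_top.2 hsurj]
  simp

/-- The inclusion `K^m → K^{m+1}` onto the coordinate hyperplane. -/
def inclLast (p m : ℕ) [Fact p.Prime] : (Fin m → ℚ_[p]) →+ (Fin (m + 1) → ℚ_[p]) where
  toFun y := fun i => if h : (i : ℕ) < m then y ⟨i, h⟩ else 0
  map_zero' := by
    ext i
    simp
  map_add' x y := by
    ext i
    by_cases h : (i : ℕ) < m <;> simp [h]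

lemma continuous_inclLast (m : ℕ) : Continuous (inclLast p m) := by
  refine continuous_pi fun i => ?_
  by_cases h : (i : ℕ) < m <;> simp only [inclLast, AddMonoidHom.coe_mk, ZeroHom.coe_mk, h]
  · exact continuous_apply _
  · exact continuous_const

lemma inclLast_mem_Kpred {m : ℕ} (y : Fin m → ℚ_[p]) : inclLast p m y ∈ Kpred p m := by
  simp [mem_Kpred, inclLast]

lemma inclLast_mem_stdLat {m : ℕ} {y : Fin m → ℚ_[p]} :
    inclLast p m y ∈ stdLat p (m + 1) ↔ y ∈ stdLat p m := by
  rw [mem_stdLat, mem_stdLat, Fin.forall_fin_succ']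
  simp [inclLast]

lemma map_inclLast_stdLat (m : ℕ) :
    (stdLat p m).toAddSubgroup.map (inclLast p m)
      = (stdLat p (m + 1) ⊓ Kpred p m).toAddSubgroup := by
  ext x
  simp only [AddSubgroup.mem_map, Submodule.mem_toAddSubgroup, Submodule.mem_inf]
  constructor
  · rintro ⟨y, hy, rfl⟩
    exact ⟨inclLast_mem_stdLat.2 hy, inclLast_mem_Kpred y⟩
  · rintro ⟨hx, hx0⟩
    have e : inclLast p m (fun i => x i.castSucc) = x := by
      ext i
      refine Fin.lastCases ?_ (fun j => ?_) i
      · rw [mem_Kpred.1 hx0]; simp [inclLast]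
      · simp [inclLast]
    exact ⟨_, inclLast_mem_stdLat.1 (e.symm ▸ hx :), e⟩

lemma genVec_last {m : ℕ} (ξ : ℤ) {v : Fin (m + 1) → ℚ_[p]} (hv : v ∈ Kpred p m) :
    genVec p m ξ v (Fin.last m) = (p : ℚ_[p]) ^ ξ := by
  simp [genVec, mem_Kpred.1 hv]

lemma single_mem_stdLat {m : ℕ} {a : ℚ_[p]} (ha : ‖a‖ ≤ 1) :
    (Pi.single (Fin.last m) a : Fin (m + 1) → ℚ_[p]) ∈ stdLat p (m + 1) := by
  rw [mem_stdLat]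
  intro i
  by_cases h : i = Fin.last m
  · subst h
    simpa using ha
  · simp [h]

lemma smul_genVec {m : ℕ} (c : ℤ_[p]) (ξ : ℤ) (v : Fin (m + 1) → ℚ_[p]) :
    c • genVec p m ξ v = Pi.single (Fin.last m) ((c : ℚ_[p]) * (p : ℚ_[p]) ^ ξ) + c • v := by
  rw [genVec, smul_add, ← Pi.single_smul]
  rfl

variable {m : ℕ} {R' R : Submodule ℤ_[p] (Fin (m + 1) → ℚ_[p])} {ξ : ℤ}
  {v : Fin (m + 1) → ℚ_[p]} {ν M : ℕ}

/-- The last coordinates of `R ∩ O^n` lie in `p^M O` where `M = max(0, ξ + ν)`: an element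
`r' + c (p^ξ e_n + v)` of `O^n` has `c v ∈ R' + O^{n-1}`, so `p^ν` divides `c`. -/
lemma norm_last_le (hR' : R' ≤ Kpred p m) (hv : v ∈ Kpred p m)
    (hν : IsLeast {k : ℕ | (p : ℚ_[p]) ^ k • v ∈ R' ⊔ (stdLat p (m + 1) ⊓ Kpred p m)} ν)
    (hR : R = R' ⊔ Submodule.span ℤ_[p] {genVec p m ξ v})
    (hM : (M : ℤ) = max 0 (ξ + ν)) {x : Fin (m + 1) → ℚ_[p]}
    (hx : x ∈ R ⊓ stdLat p (m + 1)) : x (Fin.last m) ∈ padicPow p M := by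
  obtain ⟨hxR, hxO⟩ := hx
  rw [hR] at hxR
  obtain ⟨r, hr, g, hg, rfl⟩ := Submodule.mem_sup.1 hxR
  obtain ⟨c, rfl⟩ := Submodule.mem_span_singleton.1 hg
  have hlast : (r + c • genVec p m ξ v) (Fin.last m) = (c : ℚ_[p]) * (p : ℚ_[p]) ^ ξ := by
    rw [Pi.add_apply, mem_Kpred.1 (hR' hr), zero_add, Pi.smul_apply, genVec_last ξ hv]
    rfl
  have hle := mem_stdLat.1 hxO (Fin.last m)
  rw [hlast] at hle ⊢
  rcases eq_or_ne c 0 with rfl | hc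
  · simp
  have hcv : c • v ∈ R' ⊔ (stdLat p (m + 1) ⊓ Kpred p m) := by
    refine Submodule.mem_sup.2 ⟨-r, R'.neg_mem hr, r + c • v, ⟨?_, ?_⟩, by abel⟩
    · have h := (stdLat p (m + 1)).sub_mem hxO (single_mem_stdLat hle)
      rw [smul_genVec] at h
      rwa [add_left_comm, add_sub_cancel_left] at h
    · exact (Kpred p m).add_mem (hR' hr) ((Kpred p m).smul_mem c hv)
  -- Up to a unit, `c` is `p ^ k` with `k` its valuation.
  have hcu := PadicInt.unitCoeff_spec hc
  set k := c.valuation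
  have hpk : (p : ℚ_[p]) ^ k • v ∈ R' ⊔ (stdLat p (m + 1) ⊓ Kpred p m) := by
    have h := (R' ⊔ (stdLat p (m + 1) ⊓ Kpred p m)).smul_mem
      ((PadicInt.unitCoeff hc)⁻¹ : ℤ_[p]ˣ).val hcv
    rw [smul_smul] at h
    rw [natCast_pow_smul]
    have hunit : ((PadicInt.unitCoeff hc)⁻¹ : ℤ_[p]ˣ).val * c = (p : ℤ_[p]) ^ k :=
      (Units.inv_mul_eq_iff_eq_mul _).2 hcu
    rwa [hunit] at h
  have hνk : ν ≤ k := hν.2 hpk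
  have hp1 : (1 : ℝ) < p := by exact_mod_cast (Fact.out : p.Prime).one_lt
  have hnorm : ‖(c : ℚ_[p]) * (p : ℚ_[p]) ^ ξ‖ = (p : ℝ) ^ (-(k : ℤ) - ξ) := by
    rw [norm_mul, Padic.norm_p_zpow, ← PadicInt.norm_def, PadicInt.norm_eq_zpow_neg_valuation hc,
      ← zpow_add₀ (by positivity), sub_eq_add_neg]
  rw [mem_padicPow, hnorm]
  rw [hnorm, ← zpow_zero (p : ℝ), zpow_le_zpow_iff_right₀ hp1] at hle
  rw [zpow_le_zpow_iff_right₀ hp1]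
  omega

/-- The bound of `norm_last_le` is attained: `R ∩ O^n` contains a vector whose last coordinate
is `p^M`, namely `p^{M - ξ} (p^ξ e_n + v)` corrected by an element of `R'`. -/
lemma exists_last_eq
    (hν : IsLeast {k : ℕ | (p : ℚ_[p]) ^ k • v ∈ R' ⊔ (stdLat p (m + 1) ⊓ Kpred p m)} ν)
    (hR : R = R' ⊔ Submodule.span ℤ_[p] {genVec p m ξ v})
    (hM : (M : ℤ) = max 0 (ξ + ν)) :
    ∃ w ∈ R ⊓ stdLat p (m + 1), w (Fin.last m) = (p : ℚ_[p]) ^ M := by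
  have hp0 : (p : ℚ_[p]) ≠ 0 := by exact_mod_cast (Fact.out : p.Prime).ne_zero
  obtain ⟨k, hk⟩ : ∃ k : ℕ, (k : ℤ) = M - ξ := ⟨(M - ξ).toNat, by omega⟩
  have hνk : ν ≤ k := by omega
  have hkv : (p : ℤ_[p]) ^ k • v ∈ R' ⊔ (stdLat p (m + 1) ⊓ Kpred p m) := by
    have h := (R' ⊔ (stdLat p (m + 1) ⊓ Kpred p m)).smul_mem ((p : ℤ_[p]) ^ (k - ν)) hν.1
    rwa [natCast_pow_smul, smul_smul, ← pow_add, Nat.sub_add_cancel hνk] at h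
  obtain ⟨r, hr, s, ⟨hsO, hsK⟩, hrs⟩ := Submodule.mem_sup.1 hkv
  have hpM : ((p : ℤ_[p]) ^ k : ℤ_[p]) * (p : ℚ_[p]) ^ ξ = (p : ℚ_[p]) ^ M := by
    push_cast
    rw [← zpow_natCast, ← zpow_natCast, ← zpow_add₀ hp0]
    congr 1
    omega
  have hw : -r + (p : ℤ_[p]) ^ k • genVec p m ξ v
      = Pi.single (Fin.last m) ((p : ℚ_[p]) ^ M) + s := by
    rw [smul_genVec, hpM, ← hrs]
    abel
  refine ⟨-r + (p : ℤ_[p]) ^ k • genVec p m ξ v, ⟨?_, ?_⟩, ?_⟩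
  · rw [hR]
    exact Submodule.add_mem_sup (R'.neg_mem hr)
      (Submodule.smul_mem _ _ (Submodule.mem_span_singleton_self _))
  · rw [hw]
    refine (stdLat p (m + 1)).add_mem (single_mem_stdLat ?_) hsO
    have h := PadicInt.norm_le_one ((p : ℤ_[p]) ^ M)
    rwa [PadicInt.norm_def, PadicInt.coe_pow, PadicInt.coe_natCast] at h
  · rw [hw, Pi.add_apply, mem_Kpred.1 hsK]
    simp

/-- For a submodule `L ⊆ O^n` whose last coordinates fill `p^M O`, the index of `L` in `O^n` is
`[O^{n-1} : L ∩ O^{n-1}] * p^M`. The two factors are the steps of `L ≤ L + O^{n-1} ≤ O^n`. -/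
lemma relIndex_stdLat {L : Submodule ℤ_[p] (Fin (m + 1) → ℚ_[p])}
    (hL : L ≤ stdLat p (m + 1)) (hlast : ∀ x ∈ L, x (Fin.last m) ∈ padicPow p M)
    (hw : ∃ w ∈ L, w (Fin.last m) = (p : ℚ_[p]) ^ M) :
    L.toAddSubgroup.relIndex (stdLat p (m + 1)).toAddSubgroup
      = (L ⊓ Kpred p m).toAddSubgroup.relIndex (stdLat p (m + 1) ⊓ Kpred p m).toAddSubgroup
        * p ^ M := by
  set A := (stdLat p (m + 1)).toAddSubgroup with hA
  set H := (stdLat p (m + 1) ⊓ Kpred p m).toAddSubgroup with hH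
  set π : (Fin (m + 1) → ℚ_[p]) →+ ℚ_[p] := Pi.evalAddMonoidHom _ (Fin.last m) with hπ
  have hp0 : (p : ℚ_[p]) ≠ 0 := by exact_mod_cast (Fact.out : p.Prime).ne_zero
  have hsup : H ⊔ L.toAddSubgroup = (padicPow p M).comap π ⊓ A := by
    apply le_antisymm
    · refine sup_le (fun x hx => ⟨?_, hx.1⟩) (fun x hx => ⟨hlast x hx, hL hx⟩)
      change x (Fin.last m) ∈ padicPow p M
      rw [mem_Kpred.1 hx.2]
      exact zero_mem _
    · rintro x ⟨hx, hxA⟩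
      obtain ⟨w, hwL, hwM⟩ := hw
      have hx' : ‖x (Fin.last m)‖ ≤ (p : ℝ) ^ (-M : ℤ) := hx
      -- Subtracting a multiple of `w` kills the last coordinate of `x`.
      let c : ℤ_[p] := ⟨x (Fin.last m) / (p : ℚ_[p]) ^ M, by
        rw [norm_div, ← zpow_natCast, Padic.norm_p_zpow]
        exact div_le_one_of_le₀ hx' (by positivity)⟩
      have hcw : c • w ∈ L := L.smul_mem c hwL
      refine AddSubgroup.mem_sup.2 ⟨x - c • w, ⟨?_, ?_⟩, c • w, hcw, by abel⟩
      · exact (stdLat p (m + 1)).sub_mem hxA (hL hcw)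
      · change x (Fin.last m) - x (Fin.last m) / (p : ℚ_[p]) ^ M * w (Fin.last m) = 0
        rw [hwM, div_mul_cancel₀ _ (pow_ne_zero _ hp0), sub_self]
  have hmap : A.map π = padicPow p 0 := by
    ext a
    simp only [AddSubgroup.mem_map, mem_padicPow]
    constructor
    · rintro ⟨x, hx, rfl⟩
      simpa [hπ] using mem_stdLat.1 hx (Fin.last m)
    · intro ha
      exact ⟨Pi.single (Fin.last m) a, single_mem_stdLat (by simpa using ha), by simp [hπ]⟩
  have hinf : (L ⊓ Kpred p m).toAddSubgroup = L.toAddSubgroup ⊓ H := by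
    ext x
    exact ⟨fun h => ⟨h.1, hL h.1, h.2⟩, fun h => ⟨h.1, h.2.2⟩⟩
  have h1 : L.toAddSubgroup ≤ H ⊔ L.toAddSubgroup := le_sup_right
  have h2 : H ⊔ L.toAddSubgroup ≤ A := hsup ▸ inf_le_right
  rw [← AddSubgroup.relIndex_mul_relIndex _ _ _ h1 h2, AddSubgroup.relIndex_sup_right, hsup,
    AddSubgroup.inf_relIndex_right, AddSubgroup.relIndex_comap, hmap, padicPow_relIndex, hinf,
    AddSubgroup.inf_relIndex_right]

/-- An open subgroup has finite index in the compact group `O^n`. -/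
lemma relIndex_ne_zero_of_isOpen {n : ℕ} (U : AddSubgroup (Fin n → ℚ_[p]))
    (hU : IsOpen (U : Set (Fin n → ℚ_[p]))) :
    U.relIndex (stdLat p n).toAddSubgroup ≠ 0 := by
  have : CompactSpace (stdLat p n).toAddSubgroup :=
    isCompact_iff_compactSpace.1 (isCompact_stdLat n)
  have := AddSubgroup.quotient_finite_of_isOpen (U.addSubgroupOf (stdLat p n).toAddSubgroup)
    (hU.preimage continuous_subtype_val)
  exact (AddSubgroup.finiteIndex_of_finite_quotient).index_ne_zero

end Padic

/-- For `R = R' ⊕ O(p^ξ e_n + v)` and `ν` the least `k ≥ 0` with `p^k v ∈ R' + O^{n-1}`,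
one has `vol(R ∩ O^n) / vol(R ∩ O^{n-1}) = p^{-max(0, ξ+ν)}`. -/
theorem vol_inter_std_ratio (p m : ℕ) [Fact p.Prime]
    (μ : Measure (Fin (m + 1) → ℚ_[p])) [μ.IsAddLeftInvariant]
    (μ' : Measure (Fin m → ℚ_[p])) [μ'.IsAddLeftInvariant]
    (hμ : μ ↑(stdLat p (m + 1)) = 1) (hμ' : μ' ↑(stdLat p m) = 1)
    (R' : Submodule ℤ_[p] (Fin (m + 1) → ℚ_[p])) (hR' : IsLatticeWithin (Kpred p m) R')
    (ξ : ℤ) (v : Fin (m + 1) → ℚ_[p]) (hv : v ∈ Kpred p m) (ν : ℕ)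
    (hν : IsLeast {k : ℕ | (p : ℚ_[p]) ^ k • v ∈
        R' ⊔ (stdLat p (m + 1) ⊓ Kpred p m)} ν)
    (R : Submodule ℤ_[p] (Fin (m + 1) → ℚ_[p]))
    (hRdef : R = R' ⊔ Submodule.span ℤ_[p] {genVec p m ξ v}) :
    (μ ↑(R ⊓ stdLat p (m + 1))).toReal
      = (p : ℝ) ^ (-(max 0 (ξ + (ν : ℤ)))) *
        (μ' (restrictSet p m ((R ⊓ stdLat p (m + 1) ⊓ Kpred p m : Submodule ℤ_[p] (Fin (m + 1) → ℚ_[p])) : Set (Fin (m + 1) → ℚ_[p])))).toReal := by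
  obtain ⟨hR'K, hR'c, hR'o⟩ := hR'
  obtain ⟨M, hM⟩ : ∃ M : ℕ, (M : ℤ) = max 0 (ξ + ν) :=
    ⟨(max 0 (ξ + (ν : ℤ))).toNat, Int.toNat_of_nonneg (le_max_left _ _)⟩
  have hp0 : (p : ℝ) ≠ 0 := by exact_mod_cast (Fact.out : p.Prime).ne_zero
  set L := R ⊓ stdLat p (m + 1) with hL
  have hidx := relIndex_stdLat (M := M) (L := L) inf_le_right
    (fun x hx => norm_last_le hR'K hv hν hRdef hM hx)
    (exists_last_eq hν hRdef hM)
  set L₀ : AddSubgroup (Fin m → ℚ_[p]) :=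
    (L ⊓ Kpred p m).toAddSubgroup.comap (inclLast p m) with hL₀
  have hidx₀ : (L ⊓ Kpred p m).toAddSubgroup.relIndex
      (stdLat p (m + 1) ⊓ Kpred p m).toAddSubgroup
        = L₀.relIndex (stdLat p m).toAddSubgroup := by
    rw [hL₀, AddSubgroup.relIndex_comap, map_inclLast_stdLat]
  -- `R'` is open in the hyperplane, which makes `[O^{n-1} : L₀]` finite.
  have hL₀fin : L₀.relIndex (stdLat p m).toAddSubgroup ≠ 0 := by
    have hopen : IsOpen ((R'.toAddSubgroup.comap (inclLast p m) :
        AddSubgroup (Fin m → ℚ_[p])) : Set (Fin m → ℚ_[p])) :=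
      hR'o.preimage ((continuous_inclLast m).subtype_mk fun y => inclLast_mem_Kpred y)
    have h := relIndex_ne_zero_of_isOpen _ hopen
    rw [← AddSubgroup.inf_relIndex_right] at h
    refine fun h0 => h (AddSubgroup.relIndex_eq_zero_of_le_left ?_ h0)
    rintro y ⟨hy, hyO⟩
    exact ⟨⟨hRdef ▸ Submodule.mem_sup_left hy, inclLast_mem_stdLat.2 hyO⟩, inclLast_mem_Kpred y⟩
  have hRc : IsCompact (R : Set (Fin (m + 1) → ℚ_[p])) := by
    rw [hRdef, Submodule.coe_sup]
    exact hR'c.add (isCompact_span_singleton _)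
  have hLclosed : IsClosed (L : Set (Fin (m + 1) → ℚ_[p])) :=
    hRc.isClosed.inter (isCompact_stdLat _).isClosed
  have hKclosed : IsClosed (Kpred p m : Set (Fin (m + 1) → ℚ_[p])) :=
    isClosed_singleton.preimage (continuous_apply (Fin.last m))
  have hL₀closed : IsClosed (L₀ : Set (Fin m → ℚ_[p])) :=
    (hLclosed.inter hKclosed).preimage (continuous_inclLast m)
  have hfin : L.toAddSubgroup.relIndex (stdLat p (m + 1)).toAddSubgroup ≠ 0 := by
    rw [hidx, hidx₀]
    exact mul_ne_zero hL₀fin (pow_ne_zero _ (Fact.out : p.Prime).ne_zero)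
  have vol := relIndex_mul_measure μ L.toAddSubgroup (stdLat p (m + 1)).toAddSubgroup
    (fun _ hx => hx.2) hLclosed.measurableSet (isCompact_stdLat _).isClosed.measurableSet hfin
  have vol₀ := relIndex_mul_measure μ' L₀ (stdLat p m).toAddSubgroup
    (fun y hy => inclLast_mem_stdLat.1 hy.1.2) hL₀closed.measurableSet
    (isCompact_stdLat _).isClosed.measurableSet hL₀fin
  rw [Submodule.coe_toAddSubgroup, Submodule.coe_toAddSubgroup, hμ, hidx, hidx₀] at vol
  rw [Submodule.coe_toAddSubgroup, hμ'] at vol₀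
  have vol' := congrArg ENNReal.toReal vol
  have vol₀' := congrArg ENNReal.toReal vol₀
  rw [ENNReal.toReal_mul, ENNReal.toReal_natCast, ENNReal.toReal_one] at vol' vol₀'
  change (μ L).toReal = (p : ℝ) ^ (-(max 0 (ξ + (ν : ℤ)))) * (μ' L₀).toReal
  have hL₀R : (L₀.relIndex (stdLat p m).toAddSubgroup : ℝ) ≠ 0 := by exact_mod_cast hL₀fin
  rw [← hM, zpow_neg, zpow_natCast]
  push_cast at vol'
  field_simp
  apply mul_left_cancel₀ hL₀R
  linear_combination vol' - vol₀'
end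
end

section
/- Let Lat_n denote the set of lattices in Q_p^n. Fix complex numbers α_1,...,α_n, β_1,...,β_n with Re β_j + j − 1 < 0 and Re α_j + Re β_j − n + j > 0 for all j, and set α_{n+1} = β_{n+1} = 0. Then Σ_{R ∈ Lat_n} Π_{j=1}^n [vol(R ∩ K^j)^{β_j − β_{j+1}} · vol(R ∩ O^j)^{α_j − α_{j+1}}] = Π_{j=1}^n (1 − p^{−(α_j − n + j)}) / [(1 − p^{β_j + j − 1})(1 − p^{−(α_j + β_j − n + j)})]. -/
open MeasureTheory

noncomputable section

/-- Real-valued volume of a set. -/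
def rvol {X : Type*} [MeasurableSpace X] (μ : Measure X) (A : Set X) : ℝ := (μ A).toReal

/-!
The sum is computed by induction on the dimension; `K` and `O` stand for `ℚ_p` and `ℤ_p`. A lattice in `ℚ_p^{n+1}` is the same thing as a
triple `(R, k, v mod R)`: a lattice `R` in `ℚ_p^n` (its intersection with `ℚ_p^n`), the integer `k`
for which its projection to the last coordinate is `p^k ℤ_p`, and the class modulo `R` of a vector
`v` such that `(v, p^k)` belongs to it (`build`, `latEquiv`). By Fubini, its volume is
`vol R * p^{-k}`, and the volume of its integral part is `vol (R ∩ O^n) * p^{-max(0, k + t)}`, where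
`t = depth R v` is the least `t ≥ 0` with `p^t v ∈ O^n + R` (`rv_build`, `rv_build_inf`).

Summation by parts in the exponents (`prod_cpow_sub`, `term_eq`) turns the summand into a product of
powers, with exponents `β_j` and `α_j`, of the quotients of consecutive volumes. With
`x = p^{β_{n+1}}` and `y = p^{-α_{n+1}}` the triple `(R, k, v)` therefore contributes the summand of
`R` times `x^{-k} y^{max(0, k + t)}` (`term_build`). Substituting `m = k + t` this is
`x^t * x^{-m} y^{max(0, m)}`, so that the sum over `k` and `v` is a product of two sums. The sum over
`m ∈ ℤ` is a pair of geometric series (`hasSum_int`). For the other one, the number of classes of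
depth at most `s` is `[p^{-s}(O^n + R) : R] = p^{ns} / vol (R ∩ O^n)` (`card_depth`), which gives
again a geometric series (`hasSum_height`). In total the fibre over `R` contributes
`(1 - y) / ((1 - p^n x) (1 - y / x))`, the last factor of the asserted product, times the summand of
`R` divided by `vol (R ∩ O^n)`. This division lowers each `α_j` by one (`term_shift`), which accounts
for the change from `n` to `n + 1` in the exponents `α_j - n + j`, and the induction hypothesis
applies.
-/

namespace BuildingBeta

/-! ### Haar measure on `ℚ_p^n` -/

instance padicBorelSpace (p : ℕ) [Fact p.Prime] : BorelSpace ℚ_[p] := ⟨rfl⟩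

variable {p : ℕ} [hp : Fact p.Prime] {n : ℕ}

lemma mem_one_iff {x : ℚ_[p]} : x ∈ (1 : Submodule ℤ_[p] ℚ_[p]) ↔ ‖x‖ ≤ 1 := by
  rw [Submodule.mem_one]
  constructor
  · rintro ⟨y, rfl⟩
    exact y.2
  · intro h
    exact ⟨⟨x, h⟩, rfl⟩

lemma mem_stdLat {x : Fin n → ℚ_[p]} : x ∈ stdLat p n ↔ ∀ i, ‖x i‖ ≤ 1 := by
  simp only [stdLat, Submodule.mem_pi, mem_one_iff, Set.mem_univ, true_imp_iff]

lemma stdLat_eq_pi : (stdLat p n : Set (Fin n → ℚ_[p])) =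
    Set.univ.pi fun _ => Metric.closedBall 0 1 := by
  ext x; simp [mem_stdLat]

lemma stdLat_isLattice : IsLattice (stdLat p n) := by
  unfold IsLattice
  rw [stdLat_eq_pi]
  constructor
  · exact isCompact_univ_pi fun _ => isCompact_closedBall _ _
  · exact isOpen_set_pi Set.finite_univ fun _ _ =>
      IsUltrametricDist.isOpen_closedBall _ one_ne_zero

lemma p_pos : (0 : ℝ) < p := by exact_mod_cast hp.out.pos
lemma one_lt_p : (1 : ℝ) < p := by exact_mod_cast hp.out.one_lt

/-- The Haar measure on `ℚ_p` giving `ℤ_p` volume one. -/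
def lam (p : ℕ) [Fact p.Prime] : Measure ℚ_[p] :=
  Measure.addHaarMeasure ⟨⟨Metric.closedBall 0 1, isCompact_closedBall _ _⟩, by
    rw [(IsUltrametricDist.isOpen_closedBall (0 : ℚ_[p]) one_ne_zero).interior_eq]
    exact ⟨0, by simp⟩⟩

instance : (lam p).IsAddHaarMeasure := by unfold lam; infer_instance

lemma lam_closedBall_one : lam p (Metric.closedBall 0 1) = 1 :=
  Measure.addHaarMeasure_self

/-- A set that is partitioned by finitely many translates of `B` has measure the number of these
translates times the measure of `B`. -/
lemma measure_biUnion_translates {G : Type*} [AddCommGroup G] [MeasurableSpace G]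
    [MeasurableAdd G]
    (μ : Measure G) [μ.IsAddLeftInvariant] {ι : Type*} [Finite ι] (f : ι → G) (A B : Set G)
    (hB : MeasurableSet B)
    (hA : ∀ x, x ∈ A ↔ ∃ i, x - f i ∈ B)
    (hd : ∀ i j x, x - f i ∈ B → x - f j ∈ B → i = j) : μ A = Nat.card ι * μ B := by
  have : Fintype ι := Fintype.ofFinite ι
  have h1 : A = ⋃ i, (fun x => -f i + x) ⁻¹' B := by
    ext x
    simp [hA, sub_eq_neg_add]
  rw [h1, measure_iUnion]
  · simp [measure_preimage_add]
  · intro i j hij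
    rw [Function.onFun, Set.disjoint_left]
    intro x hx hy
    refine hij (hd i j x ?_ ?_)
    · simpa [sub_eq_neg_add] using hx
    · simpa [sub_eq_neg_add] using hy
  · intro i
    exact (measurable_const_add _) hB

lemma p_ne : (p : ℚ_[p]) ≠ 0 := by exact_mod_cast hp.out.ne_zero

/-- The preimage `p⁻¹ ℤ_p` of `ℤ_p` under multiplication by `p` is the disjoint union of the `p`
translates `i / p + ℤ_p`, `0 ≤ i < p`. -/
lemma lam_scale_one : lam p {x | (p : ℚ_[p]) * x ∈ Metric.closedBall 0 1} = p := by
  rw [measure_biUnion_translates (lam p) (fun i : Fin p => (i : ℚ_[p]) / p) _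
    (Metric.closedBall 0 1) Metric.isClosed_closedBall.measurableSet, lam_closedBall_one]
  · simp
  · intro x
    simp only [Set.mem_ofPred_eq, mem_closedBall_zero_iff]
    constructor
    · intro h
      obtain ⟨m, hm, hz⟩ := PadicInt.exists_mem_range (⟨p * x, h⟩ : ℤ_[p])
      refine ⟨⟨m, hm⟩, ?_⟩
      rw [PadicInt.maximalIdeal_eq_span_p, Ideal.mem_span_singleton] at hz
      obtain ⟨c, hc⟩ := hz
      have := congrArg (fun z : ℤ_[p] => (z : ℚ_[p])) hc
      simp only [PadicInt.coe_mul, PadicInt.coe_natCast] at this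
      change (p : ℚ_[p]) * x - ((m : ℤ_[p]) : ℚ_[p]) = _ at this
      rw [PadicInt.coe_natCast] at this
      have h2 : x - (m : ℚ_[p]) / p = c := by
        have h3 := p_ne (p := p)
        field_simp
        linear_combination this
      simp only
      rw [h2]; exact c.2
    · rintro ⟨i, hi⟩
      have h2 : (p : ℚ_[p]) * x = p * (x - (i : ℚ_[p]) / p) + (i : ℕ) := by
        have := p_ne (p := p)
        field_simp
        ring
      rw [h2]
      refine (Padic.nonarchimedean _ _).trans (max_le ?_ ?_)
      · rw [norm_mul]
        refine mul_le_one₀ ?_ (norm_nonneg _) hi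
        exact_mod_cast Padic.norm_int_le_one (p := p) p
      · exact_mod_cast Padic.norm_int_le_one (p := p) (i : ℕ)
  · intro i j x hi hj
    simp only [mem_closedBall_zero_iff] at hi hj
    have h3 : ‖(((i : ℤ) - (j : ℤ) : ℤ) : ℚ_[p])‖ < 1 := by
      have h2 : (((i : ℤ) - (j : ℤ) : ℤ) : ℚ_[p]) =
          p * ((x - (j : ℚ_[p]) / p) - (x - (i : ℚ_[p]) / p)) := by
        have := p_ne (p := p)
        push_cast
        field_simp
        ring
      rw [h2, norm_mul]
      have h4 : ‖(x - (j : ℚ_[p]) / p) - (x - (i : ℚ_[p]) / p)‖ ≤ 1 := by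
        rw [sub_eq_add_neg]
        refine (Padic.nonarchimedean _ _).trans (max_le hj ?_)
        rwa [norm_neg]
      calc _ ≤ ‖(p : ℚ_[p])‖ * 1 := by gcongr
        _ < 1 := by rw [mul_one]; exact Padic.norm_p_lt_one
    rw [Padic.norm_intCast_lt_one_iff] at h3
    have h5 := Int.eq_zero_of_abs_lt_dvd h3 (by
      have := i.2; have := j.2
      rw [abs_lt]; omega)
    ext; omega

/-- Uniqueness of Haar measure, with the constant read off from a set of measure one. -/
lemma eq_smul_of_haar {G : Type*} [AddCommGroup G] [TopologicalSpace G] [IsTopologicalAddGroup G]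
    [MeasurableSpace G] [BorelSpace G] [LocallyCompactSpace G] [SecondCountableTopology G]
    (ν μ : Measure G) [ν.IsAddHaarMeasure] [μ.IsAddHaarMeasure] (S : Set G) (hS : μ S = 1) :
    ν = ν S • μ := by
  have h := Measure.isAddLeftInvariant_eq_smul ν μ
  have h2 : ν S = (Measure.addHaarScalarFactor ν μ : ENNReal) := by
    conv_lhs => rw [h]
    simp [hS]
  rw [h2]
  exact h

lemma map_mul_isAddHaarMeasure {G : Type*} [AddCommGroup G] [TopologicalSpace G]
    [IsTopologicalAddGroup G] [Module ℚ_[p] G] [ContinuousConstSMul ℚ_[p] G]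
    [MeasurableSpace G] [BorelSpace G] (μ : Measure G) [μ.IsAddHaarMeasure] :
    (μ.map (fun x => (p : ℚ_[p]) • x)).IsAddHaarMeasure :=
  AddEquiv.isAddHaarMeasure_map μ
    (DistribMulAction.toAddEquiv₀ G (p : ℚ_[p]) p_ne)
    (continuous_const_smul _) (continuous_const_smul (p : ℚ_[p])⁻¹)

lemma lam_scale {A : Set ℚ_[p]} (hA : MeasurableSet A) :
    lam p {x | (p : ℚ_[p]) * x ∈ A} = p * lam p A := by
  have h1 := map_mul_isAddHaarMeasure (p := p) (lam p)
  have hm : Measurable (fun x : ℚ_[p] => (p : ℚ_[p]) • x) :=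
    (continuous_const_smul _).measurable
  have h2 := eq_smul_of_haar ((lam p).map (fun x => (p : ℚ_[p]) • x)) (lam p)
    (Metric.closedBall 0 1) lam_closedBall_one
  rw [Measure.map_apply hm Metric.isClosed_closedBall.measurableSet] at h2
  have h3 : ((fun x : ℚ_[p] => (p : ℚ_[p]) • x) ⁻¹' (Metric.closedBall 0 1)) =
    {x | (p : ℚ_[p]) * x ∈ Metric.closedBall 0 1} := rfl
  rw [h3, lam_scale_one] at h2
  have := congrArg (fun μ => μ A) h2
  simp only [Measure.map_apply hm hA] at this
  simpa [Set.preimage] using this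

lemma norm_p_mul_le_iff (x : ℚ_[p]) (m : ℤ) :
    ‖(p : ℚ_[p]) * x‖ ≤ (p : ℝ) ^ (-(m + 1)) ↔ ‖x‖ ≤ (p : ℝ) ^ (-m) := by
  have := p_pos (p := p)
  rw [norm_mul, Padic.norm_p, neg_add, zpow_add₀ this.ne', mul_comm]
  simp [this]

/-- By the scaling property both sides are multiplied by `p` when `m` decreases by one, so the case
`m = 0` suffices. -/
lemma lam_closedBall (m : ℤ) :
    lam p {x | ‖x‖ ≤ (p : ℝ) ^ (-m)} = ENNReal.ofReal ((p : ℝ) ^ (-m)) := by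
  have hpp := p_pos (p := p)
  have key : ∀ m : ℤ, lam p {x | ‖x‖ ≤ (p : ℝ) ^ (-m)} =
      p * lam p {x | ‖x‖ ≤ (p : ℝ) ^ (-(m + 1))} := by
    intro m
    rw [← lam_scale (isClosed_le continuous_norm continuous_const).measurableSet]
    congr 1
    ext x
    exact (norm_p_mul_le_iff x m).symm
  have e : ∀ m : ℤ, ENNReal.ofReal ((p : ℝ) ^ (-m)) =
      p * ENNReal.ofReal ((p : ℝ) ^ (-(m + 1))) := by
    intro m
    rw [← ENNReal.ofReal_natCast, ← ENNReal.ofReal_mul (by positivity), neg_add,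
      zpow_add₀ hpp.ne']
    congr 1
    field_simp
  have hp0 : (p : ENNReal) ≠ 0 := by exact_mod_cast hp.out.ne_zero
  induction m using Int.induction_on with
  | zero =>
    have := lam_closedBall_one (p := p)
    have h : Metric.closedBall (0 : ℚ_[p]) 1 = {x | ‖x‖ ≤ (p : ℝ) ^ (-(0 : ℤ))} := by
      ext; simp
    rw [← h, this]; simp
  | succ m ih =>
    rw [key, e] at ih
    exact (ENNReal.mul_right_inj hp0 (ENNReal.natCast_ne_top _)).1 ih
  | pred m ih =>
    rw [key, e]
    simpa using congrArg (fun z => (p : ENNReal) * z) ih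

lemma haar_of_norm {j : ℕ} (ν : Measure (Fin j → ℚ_[p])) [ν.IsAddLeftInvariant]
    (h : ν (stdLat p j) = 1) : ν.IsAddHaarMeasure := by
  refine Measure.isAddHaarMeasure_of_isCompact_nonempty_interior ν (stdLat p j)
    stdLat_isLattice.1 ?_ ?_ ?_
  · rw [stdLat_isLattice.2.interior_eq]; exact ⟨0, (stdLat p j).zero_mem⟩
  · simp [h]
  · simp [h]

/-- An invariant measure normalised on `ℤ_p^j` is the product of the normalised measures on `ℚ_p`;
local finiteness and positivity on open sets come from the compact open set `ℤ_p^j` of measure one. -/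
lemma eq_pi_lam {j : ℕ} (ν : Measure (Fin j → ℚ_[p])) [ν.IsAddLeftInvariant]
    (h : ν (stdLat p j) = 1) : ν = Measure.pi fun _ => lam p := by
  have := haar_of_norm ν h
  have h2 : (Measure.pi fun _ : Fin j => lam p) (stdLat p j) = 1 := by
    rw [stdLat_eq_pi, Measure.pi_pi]
    simp [lam_closedBall_one]
  have := eq_smul_of_haar ν (Measure.pi fun _ : Fin j => lam p) _ h2
  rwa [h, one_smul] at this

/-- The product measure on `ℚ_p^n`, normalised by `vol (ℤ_p^n) = 1`. -/
def vol (p n : ℕ) [Fact p.Prime] : Measure (Fin n → ℚ_[p]) := Measure.pi fun _ => lam p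

instance : (vol p n).IsAddHaarMeasure := by unfold vol; infer_instance

lemma vol_stdLat : vol p n (stdLat p n) = 1 := by
  rw [vol, stdLat_eq_pi, Measure.pi_pi]
  simp [lam_closedBall_one]

lemma vol_scale {A : Set (Fin n → ℚ_[p])} (hA : MeasurableSet A) :
    vol p n {x | (p : ℚ_[p]) • x ∈ A} = (p : ENNReal) ^ n * vol p n A := by
  have h1 := map_mul_isAddHaarMeasure (p := p) (vol p n)
  have hm : Measurable (fun x : Fin n → ℚ_[p] => (p : ℚ_[p]) • x) :=
    (continuous_const_smul _).measurable
  have h2 := eq_smul_of_haar ((vol p n).map (fun x => (p : ℚ_[p]) • x)) (vol p n)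
    _ vol_stdLat
  rw [Measure.map_apply hm stdLat_isLattice.2.measurableSet] at h2
  have h3 : ((fun x : Fin n → ℚ_[p] => (p : ℚ_[p]) • x) ⁻¹' (stdLat p n)) =
    Set.univ.pi fun _ => {x | (p : ℚ_[p]) * x ∈ Metric.closedBall 0 1} := by
    ext x; simp [mem_stdLat]
  have h4 : vol p n (Set.univ.pi fun _ => {x | (p : ℚ_[p]) * x ∈ Metric.closedBall 0 1}) =
      (p : ENNReal) ^ n := by
    rw [vol, Measure.pi_pi, Finset.prod_congr rfl fun _ _ => lam_scale_one]
    simp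
  rw [h3, h4] at h2
  have := congrArg (fun μ => μ A) h2
  simp only [Measure.map_apply hm hA] at this
  simpa [Set.preimage] using this

/-! ### Lattices and their volumes -/

/-- The vector of `ℚ_p^{n+1}` with initial part `y` and last coordinate `c`. -/
def app (y : Fin n → ℚ_[p]) (c : ℚ_[p]) : Fin (n + 1) → ℚ_[p] :=
  Fin.snoc (α := fun _ => ℚ_[p]) y c

@[simp] lemma init_app (y : Fin n → ℚ_[p]) (c : ℚ_[p]) : Fin.init (app y c) = y :=
  Fin.init_snoc (α := fun _ => ℚ_[p]) _ _

@[simp] lemma app_last (y : Fin n → ℚ_[p]) (c : ℚ_[p]) : app y c (Fin.last n) = c :=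
  Fin.snoc_last (α := fun _ => ℚ_[p]) _ _

@[simp] lemma app_castSucc (y : Fin n → ℚ_[p]) (c : ℚ_[p]) (i : Fin n) :
    app y c i.castSucc = y i :=
  Fin.snoc_castSucc (α := fun _ => ℚ_[p]) _ _ _

lemma app_init_self (x : Fin (n + 1) → ℚ_[p]) : app (Fin.init x) (x (Fin.last n)) = x :=
  Fin.snoc_init_self x

lemma app_ext {x y : Fin (n + 1) → ℚ_[p]} (h1 : Fin.init x = Fin.init y)
    (h2 : x (Fin.last n) = y (Fin.last n)) : x = y := by
  rw [← app_init_self x, ← app_init_self y, h1, h2]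

lemma app_sub (y z : Fin n → ℚ_[p]) (c d : ℚ_[p]) :
    app y c - app z d = app (y - z) (c - d) := by
  apply app_ext
  · ext i; simp [Fin.init]
  · simp

lemma continuous_init : Continuous (fun x : Fin (n + 1) → ℚ_[p] => (Fin.init x : Fin n → ℚ_[p])) :=
  continuous_pi fun _ => continuous_apply _

lemma continuous_app : Continuous (fun x : (Fin n → ℚ_[p]) × ℚ_[p] => app x.1 x.2) := by
  refine continuous_pi fun i => ?_
  refine Fin.lastCases ?_ (fun i => ?_) i
  · simpa using continuous_snd
  · simpa [Function.comp_def] using (continuous_apply i).comp continuous_fst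

/-- The inclusion of `ℚ_p^n` in `ℚ_p^{n+1}` as the span of the first `n` basis vectors. -/
def inc (p n : ℕ) [Fact p.Prime] : (Fin n → ℚ_[p]) →ₗ[ℤ_[p]] (Fin (n + 1) → ℚ_[p]) where
  toFun y := app y 0
  map_add' x y := by
    apply app_ext
    · ext i; simp [Fin.init]
    · simp
  map_smul' c x := by
    apply app_ext
    · ext i; simp [Fin.init]
    · simp

/-- The intersection of a submodule of `ℚ_p^{n+1}` with `ℚ_p^n`. -/
def first (R : Submodule ℤ_[p] (Fin (n + 1) → ℚ_[p])) : Submodule ℤ_[p] (Fin n → ℚ_[p]) :=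
  R.comap (inc p n)

lemma mem_first {R : Submodule ℤ_[p] (Fin (n + 1) → ℚ_[p])} {y : Fin n → ℚ_[p]} :
    y ∈ first R ↔ app y 0 ∈ R := Iff.rfl

lemma first_isLattice {R : Submodule ℤ_[p] (Fin (n + 1) → ℚ_[p])} (hR : IsLattice R) :
    IsLattice (first R) := by
  have hc : Continuous (fun y : Fin n → ℚ_[p] => app y 0) :=
    continuous_app.comp (continuous_id.prodMk continuous_const)
  refine ⟨?_, hR.2.preimage hc⟩
  have : Topology.IsClosedEmbedding (fun y : Fin n → ℚ_[p] => app y 0) :=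
    Function.LeftInverse.isClosedEmbedding (f := fun x => Fin.init x) (fun y => by simp)
      continuous_init hc
  exact this.isCompact_preimage hR.1

lemma inf_isLattice {A B : Submodule ℤ_[p] (Fin n → ℚ_[p])} (hA : IsLattice A)
    (hB : IsLattice B) : IsLattice (A ⊓ B) :=
  ⟨hA.1.inter_right hB.1.isClosed, hA.2.inter hB.2⟩

lemma sup_isLattice {A B : Submodule ℤ_[p] (Fin n → ℚ_[p])} (hA : IsLattice A)
    (hB : IsLattice B) : IsLattice (A ⊔ B) := by
  refine ⟨?_, AddSubgroup.isOpen_mono (H₁ := A.toAddSubgroup) (H₂ := (A ⊔ B).toAddSubgroup)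
    (fun x hx => (le_sup_left : A ≤ A ⊔ B) hx) hA.2⟩
  rw [Submodule.coe_sup]
  exact hA.1.add hB.1

/-- The dilate `p^{-s} R`. -/
def dil (s : ℕ) (R : Submodule ℤ_[p] (Fin n → ℚ_[p])) : Submodule ℤ_[p] (Fin n → ℚ_[p]) :=
  R.comap (LinearMap.lsmul ℤ_[p] (Fin n → ℚ_[p]) ((p : ℤ_[p]) ^ s))

lemma zsmul_eq (c : ℤ_[p]) (x : Fin n → ℚ_[p]) : c • x = (c : ℚ_[p]) • x := rfl

lemma mem_dil {s : ℕ} {R : Submodule ℤ_[p] (Fin n → ℚ_[p])} {x : Fin n → ℚ_[p]} :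
    x ∈ dil s R ↔ ((p : ℤ_[p]) ^ s) • x ∈ R := Iff.rfl

lemma mem_dil' {s : ℕ} {R : Submodule ℤ_[p] (Fin n → ℚ_[p])} {x : Fin n → ℚ_[p]} :
    x ∈ dil s R ↔ ((p : ℚ_[p]) ^ s) • x ∈ R := by
  rw [mem_dil, zsmul_eq]; simp

lemma dil_isLattice {R : Submodule ℤ_[p] (Fin n → ℚ_[p])} (hR : IsLattice R) (s : ℕ) :
    IsLattice (dil s R) := by
  have h : (dil s R : Set (Fin n → ℚ_[p])) =
      (Homeomorph.smulOfNeZero ((p : ℚ_[p]) ^ s) (pow_ne_zero _ p_ne)) ⁻¹' R := by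
    ext x; exact mem_dil'
  unfold IsLattice
  rw [h]
  exact ⟨(Homeomorph.isCompact_preimage _).2 hR.1, hR.2.preimage (Homeomorph.continuous _)⟩

lemma vol_dil {R : Submodule ℤ_[p] (Fin n → ℚ_[p])} (hR : IsLattice R) (s : ℕ) :
    vol p n (dil s R) = ((p : ENNReal) ^ s) ^ n * vol p n R := by
  induction s with
  | zero =>
    have : dil 0 R = R := by ext x; simp [mem_dil']
    simp [this]
  | succ s ih =>
    have : (dil (s + 1) R : Set (Fin n → ℚ_[p])) =
        {x | (p : ℚ_[p]) • x ∈ (dil s R : Set (Fin n → ℚ_[p]))} := by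
      ext x
      simp [mem_dil', smul_smul, pow_succ]
    rw [this, vol_scale (dil_isLattice hR s).2.measurableSet, ih]
    ring

lemma vol_ne_zero {R : Submodule ℤ_[p] (Fin n → ℚ_[p])} (hR : IsLattice R) :
    vol p n R ≠ 0 := (hR.2.measure_pos _ ⟨0, R.zero_mem⟩).ne'

lemma vol_ne_top {R : Submodule ℤ_[p] (Fin n → ℚ_[p])} (hR : IsLattice R) :
    vol p n R ≠ ⊤ := hR.1.measure_lt_top.ne

/-- The image of a compact set in the discrete quotient by an open subgroup is finite. -/
lemma finite_map_mkQ {A B : Submodule ℤ_[p] (Fin n → ℚ_[p])} (hA : IsLattice A)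
    (hB : IsLattice B) : Finite (A.map B.mkQ) := by
  have hd : DiscreteTopology ((Fin n → ℚ_[p]) ⧸ B) :=
    QuotientAddGroup.discreteTopology (N := B.toAddSubgroup) hB.2
  have hc : Continuous (B.mkQ : (Fin n → ℚ_[p]) → ((Fin n → ℚ_[p]) ⧸ B)) :=
    continuous_quot_mk
  have := (hA.1.image hc).finite_of_discrete
  exact this.to_subtype

/-- The volume of `A` is the number of cosets of `B` meeting `A`, times `vol (A ∩ B)`. -/
lemma vol_eq_card {A B : Submodule ℤ_[p] (Fin n → ℚ_[p])} (hA : IsLattice A)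
    (hB : IsLattice B) :
    vol p n A = Nat.card (A.map B.mkQ) * vol p n (A ⊓ B : Submodule ℤ_[p] (Fin n → ℚ_[p])) := by
  have := finite_map_mkQ hA hB
  have h : ∀ q : A.map B.mkQ, ∃ a, a ∈ A ∧ B.mkQ a = q := fun q => q.2
  choose f hfA hf using h
  refine measure_biUnion_translates (vol p n) f _ _ (inf_isLattice hA hB).2.measurableSet ?_ ?_
  · intro x
    constructor
    · intro hx
      refine ⟨⟨B.mkQ x, x, hx, rfl⟩, A.sub_mem hx (hfA _), ?_⟩
      have := hf ⟨B.mkQ x, x, hx, rfl⟩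
      rw [eq_comm] at this
      exact (Submodule.Quotient.eq B).1 this
    · rintro ⟨i, hi, -⟩
      simpa using A.add_mem hi (hfA i)
  · rintro i j x ⟨-, hi⟩ ⟨-, hj⟩
    have h1 : B.mkQ x = i := by rw [← hf i]; exact (Submodule.Quotient.eq B).2 hi
    have h2 : B.mkQ x = j := by rw [← hf j]; exact (Submodule.Quotient.eq B).2 hj
    exact Subtype.ext (h1.symm.trans h2)

/-- Fubini for a lattice: the fibres of the last coordinate are cosets of `R ∩ ℚ_p^n`. -/
lemma vol_succ {R : Submodule ℤ_[p] (Fin (n + 1) → ℚ_[p])} (hR : IsLattice R) (m : ℤ)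
    (hπ : ∀ c, (∃ y, app y c ∈ R) ↔ ‖c‖ ≤ (p : ℝ) ^ (-m)) :
    vol p (n + 1) R = vol p n (first R) * ENNReal.ofReal ((p : ℝ) ^ (-m)) := by
  have h1 := measurePreserving_piFinSuccAbove (fun _ : Fin (n + 1) => lam p) (Fin.last n)
  have h2 : (R : Set (Fin (n + 1) → ℚ_[p])) =
      (MeasurableEquiv.piFinSuccAbove (fun _ : Fin (n + 1) => ℚ_[p]) (Fin.last n)) ⁻¹'
        {x | app x.2 x.1 ∈ R} := by
    ext x
    simp only [Set.mem_preimage, Set.mem_ofPred_eq, SetLike.mem_coe]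
    have : app (MeasurableEquiv.piFinSuccAbove (fun _ => ℚ_[p]) (Fin.last n) x).2
      (MeasurableEquiv.piFinSuccAbove (fun _ => ℚ_[p]) (Fin.last n) x).1 = x := by
      apply app_ext
      · rw [init_app]
        ext i
        simp [MeasurableEquiv.piFinSuccAbove, Fin.init]
      · simp [MeasurableEquiv.piFinSuccAbove]
    rw [this]
  have hopen : IsOpen {x : ℚ_[p] × (Fin n → ℚ_[p]) | app x.2 x.1 ∈ R} :=
    hR.2.preimage (continuous_app.comp continuous_swap)
  rw [vol]
  conv_lhs => rw [h2]
  rw [h1.measure_preimage hopen.measurableSet.nullMeasurableSet,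
    Measure.prod_apply hopen.measurableSet, ← lam_closedBall m]
  have h3 : ∀ c : ℚ_[p], (Measure.pi fun _ : Fin n => lam p)
      (Prod.mk c ⁻¹' {x : ℚ_[p] × (Fin n → ℚ_[p]) | app x.2 x.1 ∈ R}) =
      Set.indicator {x : ℚ_[p] | ‖x‖ ≤ (p : ℝ) ^ (-m)} (fun _ => vol p n (first R)) c := by
    intro c
    by_cases hc : ‖c‖ ≤ (p : ℝ) ^ (-m)
    · rw [Set.indicator_of_mem (show c ∈ {x : ℚ_[p] | ‖x‖ ≤ (p : ℝ) ^ (-m)} from hc)]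
      obtain ⟨y, hy⟩ := (hπ c).2 hc
      rw [vol, ← measure_preimage_add _ y]
      congr 1
      ext x
      simp only [Set.mem_preimage, Set.mem_ofPred_eq, SetLike.mem_coe, mem_first]
      have : app x 0 = app (y + x) c - app y c := by
        rw [app_sub, sub_self, add_sub_cancel_left]
      rw [this, Submodule.sub_mem_iff_left _ hy]
    · rw [Set.indicator_of_notMem (show c ∉ {x : ℚ_[p] | ‖x‖ ≤ (p : ℝ) ^ (-m)} from hc)]
      have : Prod.mk c ⁻¹' {x : ℚ_[p] × (Fin n → ℚ_[p]) | app x.2 x.1 ∈ R} = ∅ := by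
        ext x
        simp only [Set.mem_preimage, Set.mem_ofPred_eq, Set.mem_empty_iff_false, iff_false]
        exact fun h => hc ((hπ c).1 ⟨x, h⟩)
      rw [this, measure_empty]
  simp only [h3]
  rw [lintegral_indicator_const (isClosed_le continuous_norm continuous_const).measurableSet]

/-! ### Lattices with a given intersection with `ℚ_p^n` -/

/-- The lattice in `ℚ_p^{n+1}` generated by `R` and the vector `(v, p^k)`, described by the
condition on `(y, c)` that `c p^{-k}` be integral and `y - c p^{-k} v` lie in `R`. -/
def build (R : Submodule ℤ_[p] (Fin n → ℚ_[p])) (k : ℤ) (v : Fin n → ℚ_[p]) :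
    Submodule ℤ_[p] (Fin (n + 1) → ℚ_[p]) where
  carrier := {x | Fin.init x - ((p : ℚ_[p]) ^ (-k) * x (Fin.last n)) • v ∈ R ∧
    (p : ℚ_[p]) ^ (-k) * x (Fin.last n) ∈ (1 : Submodule ℤ_[p] ℚ_[p])}
  zero_mem' := by
    have : (Fin.init (0 : Fin (n + 1) → ℚ_[p]) : Fin n → ℚ_[p]) = 0 := rfl
    simp [this]
  add_mem' := by
    rintro x y ⟨hx, hx'⟩ ⟨hy, hy'⟩
    refine ⟨?_, ?_⟩
    · convert R.add_mem hx hy using 1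
      ext i
      simp [Fin.init]
      ring
    · convert Submodule.add_mem _ hx' hy' using 1
      simp
      ring
  smul_mem' := by
    rintro c x ⟨hx, hx'⟩
    refine ⟨?_, ?_⟩
    · convert R.smul_mem c hx using 1
      ext i
      change (c : ℚ_[p]) * x i.castSucc - (p : ℚ_[p]) ^ (-k) * ((c : ℚ_[p]) * x (Fin.last n)) * v i
        = (c : ℚ_[p]) * (x i.castSucc - (p : ℚ_[p]) ^ (-k) * x (Fin.last n) * v i)
      ring
    · convert Submodule.smul_mem _ c hx' using 1
      exact mul_left_comm ((p : ℚ_[p]) ^ (-k)) (c : ℚ_[p]) (x (Fin.last n))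

lemma norm_zpow_mul_le_iff (k m : ℤ) (c : ℚ_[p]) :
    ‖(p : ℚ_[p]) ^ (-k) * c‖ ≤ (p : ℝ) ^ (-m) ↔ ‖c‖ ≤ (p : ℝ) ^ (-(k + m)) := by
  have := p_pos (p := p)
  rw [norm_mul, norm_zpow, Padic.norm_p, neg_add, zpow_add₀ this.ne', inv_zpow, zpow_neg,
    inv_inv, inv_mul_eq_div, le_div_iff₀ (by positivity), mul_comm]

lemma mem_build {R : Submodule ℤ_[p] (Fin n → ℚ_[p])} {k : ℤ} {v y : Fin n → ℚ_[p]} {c : ℚ_[p]} :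
    app y c ∈ build R k v ↔ y - ((p : ℚ_[p]) ^ (-k) * c) • v ∈ R ∧ ‖c‖ ≤ (p : ℝ) ^ (-k) := by
  have h := norm_zpow_mul_le_iff (p := p) k 0 c
  simp only [neg_zero, zpow_zero, add_zero] at h
  rw [← h, ← mem_one_iff]
  change Fin.init (app y c) - ((p : ℚ_[p]) ^ (-k) * (app y c) (Fin.last n)) • v ∈ R ∧
    (p : ℚ_[p]) ^ (-k) * (app y c) (Fin.last n) ∈ (1 : Submodule ℤ_[p] ℚ_[p]) ↔ _
  simp

lemma build_isLattice {R : Submodule ℤ_[p] (Fin n → ℚ_[p])} (hR : IsLattice R) (k : ℤ)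
    (v : Fin n → ℚ_[p]) : IsLattice (build R k v) := by
  have hp0 := p_ne (p := p)
  have e1 : ∀ c : ℚ_[p], (p : ℚ_[p]) ^ k * ((p : ℚ_[p]) ^ (-k) * c) = c := fun c => by
    rw [← mul_assoc, ← zpow_add₀ hp0]; simp
  have e2 : ∀ c : ℚ_[p], (p : ℚ_[p]) ^ (-k) * ((p : ℚ_[p]) ^ k * c) = c := fun c => by
    rw [← mul_assoc, ← zpow_add₀ hp0]; simp
  constructor
  · have h : (build R k v : Set (Fin (n + 1) → ℚ_[p])) =
        (fun x : (Fin n → ℚ_[p]) × ℚ_[p] => app (x.1 + x.2 • v) ((p : ℚ_[p]) ^ k * x.2)) ''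
          ((R : Set (Fin n → ℚ_[p])) ×ˢ Metric.closedBall 0 1) := by
      ext x
      constructor
      · rintro ⟨hx, hx'⟩
        rw [mem_one_iff] at hx'
        refine ⟨(_, _), ⟨hx, mem_closedBall_zero_iff.2 hx'⟩, ?_⟩
        simp only [e1, sub_add_cancel, app_init_self]
      · rintro ⟨⟨y, c⟩, ⟨hy, hc⟩, rfl⟩
        rw [mem_closedBall_zero_iff, ← mem_one_iff] at hc
        refine ⟨?_, ?_⟩
        · simp only [init_app, app_last, e2, add_sub_cancel_right]
          exact hy
        · simpa only [app_last, e2] using hc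
    rw [h]
    refine (hR.1.prod (isCompact_closedBall _ _)).image ?_
    exact continuous_app.comp ((continuous_fst.add (continuous_snd.smul continuous_const)).prodMk
      (continuous_const.mul continuous_snd))
  · have h1 : Continuous fun x : Fin (n + 1) → ℚ_[p] =>
        (p : ℚ_[p]) ^ (-k) * x (Fin.last n) := continuous_const.mul (continuous_apply _)
    refine (hR.2.preimage (continuous_init.sub (h1.smul continuous_const))).inter ?_
    have : ((1 : Submodule ℤ_[p] ℚ_[p]) : Set ℚ_[p]) = Metric.closedBall 0 1 := by
      ext; simp only [SetLike.mem_coe, mem_one_iff, mem_closedBall_zero_iff]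
    exact (this ▸ IsUltrametricDist.isOpen_closedBall (0 : ℚ_[p]) one_ne_zero :
      IsOpen ((1 : Submodule ℤ_[p] ℚ_[p]) : Set ℚ_[p])).preimage h1

lemma first_build (R : Submodule ℤ_[p] (Fin n → ℚ_[p])) (k : ℤ) (v : Fin n → ℚ_[p]) :
    first (build R k v) = R := by
  ext y
  have := p_pos (p := p)
  have h : (0 : ℝ) ≤ (p : ℝ) ^ k := by positivity
  simp [mem_first, mem_build, h]

/-- The last coordinates of the vectors in `build R k v` form the ideal `p^k ℤ_p`. -/
lemma proj_build (R : Submodule ℤ_[p] (Fin n → ℚ_[p])) (k : ℤ) (v : Fin n → ℚ_[p]) (c : ℚ_[p]) :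
    (∃ y, app y c ∈ build R k v) ↔ ‖c‖ ≤ (p : ℝ) ^ (-k) := by
  constructor
  · rintro ⟨y, hy⟩
    exact (mem_build.1 hy).2
  · intro h
    exact ⟨_, mem_build.2 ⟨by rw [sub_self]; exact R.zero_mem, h⟩⟩

lemma zpow_inj {a b : ℤ} (h : ∀ c : ℚ_[p], ‖c‖ ≤ (p : ℝ) ^ (-a) ↔ ‖c‖ ≤ (p : ℝ) ^ (-b)) :
    a = b := by
  have h1 := (h ((p : ℚ_[p]) ^ a)).1 (by rw [Padic.norm_p_zpow])
  have h2 := (h ((p : ℚ_[p]) ^ b)).2 (by rw [Padic.norm_p_zpow])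
  rw [Padic.norm_p_zpow, zpow_le_zpow_iff_right₀ one_lt_p] at h1 h2
  omega

lemma build_congr {R : Submodule ℤ_[p] (Fin n → ℚ_[p])} {k : ℤ} {v w : Fin n → ℚ_[p]}
    (h : v - w ∈ R) : build R k v = build R k w := by
  ext x
  rw [← app_init_self x, mem_build, mem_build, and_congr_left_iff]
  intro hc
  set c := x (Fin.last n)
  have h1 := (norm_zpow_mul_le_iff (p := p) k 0 c)
  simp only [neg_zero, zpow_zero, add_zero] at h1
  have h2 : ((p : ℚ_[p]) ^ (-k) * c) • (v - w) ∈ R :=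
    R.smul_mem (⟨_, h1.2 hc⟩ : ℤ_[p]) h
  have h3 : Fin.init x - ((p : ℚ_[p]) ^ (-k) * c) • w =
      (Fin.init x - ((p : ℚ_[p]) ^ (-k) * c) • v) + ((p : ℚ_[p]) ^ (-k) * c) • (v - w) := by
    rw [smul_sub]; abel
  rw [h3, R.add_mem_iff_left h2]

/-- The data `R`, `k` and `v` modulo `R` can be recovered from `build R k v`: the lattice `R` as the
intersection with `ℚ_p^n`, the integer `k` from the projection to the last coordinate, and `v` from
the vectors with last coordinate `p^k`. -/
lemma build_inj {R R' : Submodule ℤ_[p] (Fin n → ℚ_[p])} {k k' : ℤ} {v v' : Fin n → ℚ_[p]}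
    (h : build R k v = build R' k' v') : R = R' ∧ k = k' ∧ v - v' ∈ R := by
  have h1 : R = R' := by rw [← first_build R k v, h, first_build]
  have h2 : k = k' := by
    refine zpow_inj (p := p) fun c => ?_
    rw [← proj_build R k v, h, proj_build]
  refine ⟨h1, h2, ?_⟩
  subst h1 h2
  have h3 : app v ((p : ℚ_[p]) ^ k) ∈ build R k v := by
    rw [mem_build, ← zpow_add₀ p_ne, Padic.norm_p_zpow]
    simp
  rw [h, mem_build, ← zpow_add₀ p_ne] at h3
  simpa using h3.1

lemma exists_pow_smul_mem {R : Submodule ℤ_[p] (Fin n → ℚ_[p])} (hR : IsLattice R)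
    (v : Fin n → ℚ_[p]) : ∃ s : ℕ, ((p : ℚ_[p]) ^ s) • v ∈ R := by
  have h1 : Filter.Tendsto (fun s : ℕ => ((p : ℚ_[p]) ^ s) • v) Filter.atTop (nhds 0) := by
    have := (tendsto_pow_atTop_nhds_zero_of_norm_lt_one
      (Padic.norm_p_lt_one (p := p))).smul_const v
    simpa using this
  exact (h1.eventually (hR.2.mem_nhds R.zero_mem)).exists

/-- Every lattice `R` is of the form `build (first R) k v`: a vector of `R` whose last coordinate has
maximal norm, rescaled by a unit, is `(v, p^k)`. -/
lemma build_surj {R : Submodule ℤ_[p] (Fin (n + 1) → ℚ_[p])} (hR : IsLattice R) :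
    ∃ k v, R = build (first R) k v := by
  obtain ⟨x0, hx0, hmax⟩ := hR.1.exists_isMaxOn ⟨0, R.zero_mem⟩
    (f := fun x => ‖x (Fin.last n)‖) (continuous_norm.comp (continuous_apply _)).continuousOn
  have hmax' : ∀ x ∈ R, ‖x (Fin.last n)‖ ≤ ‖x0 (Fin.last n)‖ := fun x hx => hmax hx
  set d := x0 (Fin.last n) with hd
  have hd0 : d ≠ 0 := by
    obtain ⟨s, hs⟩ := exists_pow_smul_mem hR (app 0 1)
    intro h
    have := hmax' _ hs
    rw [h] at this
    simp at this
    exact absurd this (not_le.2 (by have := p_pos (p := p); positivity))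
  have hp0 := p_ne (p := p)
  obtain ⟨k, hk⟩ := (⟨_, Padic.norm_eq_zpow_neg_valuation hd0⟩ :
    ∃ k : ℤ, ‖d‖ = (p : ℝ) ^ (-k))
  -- rescale `x0` by a unit so that its last coordinate becomes `p^k`
  obtain ⟨v, hv⟩ : ∃ v, app v ((p : ℚ_[p]) ^ k) ∈ R := by
    have hu : ‖(p : ℚ_[p]) ^ k / d‖ ≤ 1 := by
      rw [norm_div, hk, Padic.norm_p_zpow]
      exact div_self_le_one _
    have : ((p : ℚ_[p]) ^ k / d) • x0 ∈ R := R.smul_mem (⟨_, hu⟩ : ℤ_[p]) hx0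
    rw [← app_init_self (((p : ℚ_[p]) ^ k / d) • x0)] at this
    refine ⟨Fin.init (((p : ℚ_[p]) ^ k / d) • x0), ?_⟩
    convert this using 2
    rw [Pi.smul_apply, smul_eq_mul, ← hd, div_mul_cancel₀ _ hd0]
  refine ⟨k, v, ?_⟩
  ext x
  rw [← app_init_self x, mem_build]
  set c := x (Fin.last n)
  have h1 := (norm_zpow_mul_le_iff (p := p) k 0 c)
  simp only [neg_zero, zpow_zero, add_zero] at h1
  have key : ‖c‖ ≤ (p : ℝ) ^ (-k) → (app (Fin.init x) c ∈ R ↔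
      Fin.init x - ((p : ℚ_[p]) ^ (-k) * c) • v ∈ first R) := by
    intro hc
    have h2 : ((p : ℚ_[p]) ^ (-k) * c) • (app v ((p : ℚ_[p]) ^ k)) ∈ R :=
      R.smul_mem (⟨_, h1.2 hc⟩ : ℤ_[p]) hv
    have h3 : app (Fin.init x - ((p : ℚ_[p]) ^ (-k) * c) • v) 0 = app (Fin.init x) c -
        ((p : ℚ_[p]) ^ (-k) * c) • (app v ((p : ℚ_[p]) ^ k)) := by
      apply app_ext
      · ext i; simp [Fin.init]
      · simp only [app_last, Pi.sub_apply, Pi.smul_apply, smul_eq_mul]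
        rw [zpow_neg]; field_simp; ring
    rw [mem_first, h3, R.sub_mem_iff_left h2]
  constructor
  · intro h
    have hc : ‖c‖ ≤ (p : ℝ) ^ (-k) := by
      have := hmax' _ h
      rwa [app_last, hk] at this
    exact ⟨(key hc).1 h, hc⟩
  · rintro ⟨h, hc⟩
    exact (key hc).2 h

/-! ### Depth of a vector, and the volume of the integral part -/

/-- The least `t ≥ 0` with `p^t v ∈ O^n + R`; such `t` exist when `R` is a lattice. -/
def depth (R : Submodule ℤ_[p] (Fin n → ℚ_[p])) (v : Fin n → ℚ_[p]) : ℕ :=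
  sInf {t : ℕ | ((p : ℤ_[p]) ^ t) • v ∈ stdLat p n ⊔ R}

lemma depth_spec {R : Submodule ℤ_[p] (Fin n → ℚ_[p])} (hR : IsLattice R) (v : Fin n → ℚ_[p]) :
    ((p : ℤ_[p]) ^ depth R v) • v ∈ stdLat p n ⊔ R := by
  obtain ⟨s, hs⟩ := exists_pow_smul_mem (sup_isLattice stdLat_isLattice hR) v
  refine Nat.sInf_mem (s := {t : ℕ | ((p : ℤ_[p]) ^ t) • v ∈ stdLat p n ⊔ R}) ⟨s, ?_⟩
  rw [Set.mem_ofPred_eq, zsmul_eq]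
  simpa using hs

/-- The `a` with `a v ∈ O^n + R` form the ideal generated by `p ^ depth R v`. -/
lemma smul_mem_iff {R : Submodule ℤ_[p] (Fin n → ℚ_[p])} (hR : IsLattice R) (v : Fin n → ℚ_[p])
    (a : ℤ_[p]) : a • v ∈ stdLat p n ⊔ R ↔ ‖a‖ ≤ (p : ℝ) ^ (-(depth R v : ℤ)) := by
  rw [PadicInt.norm_le_pow_iff_mem_span_pow, Ideal.mem_span_singleton]
  constructor
  · intro h
    by_cases ha : a = 0
    · rw [ha]; exact dvd_zero _
    rw [PadicInt.unitCoeff_spec ha, mul_smul] at h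
    rw [PadicInt.unitCoeff_spec ha]
    have h2 := Submodule.smul_mem _ (((PadicInt.unitCoeff ha)⁻¹ : ℤ_[p]ˣ) : ℤ_[p]) h
    rw [smul_smul, Units.inv_mul, one_smul] at h2
    exact Dvd.dvd.mul_left (pow_dvd_pow _ (Nat.sInf_le h2)) _
  · rintro ⟨b, rfl⟩
    rw [mul_comm, mul_smul]
    exact Submodule.smul_mem _ _ (depth_spec hR v)

lemma depth_le_iff {R : Submodule ℤ_[p] (Fin n → ℚ_[p])} (hR : IsLattice R) (v : Fin n → ℚ_[p])
    (s : ℕ) : depth R v ≤ s ↔ v ∈ dil s (stdLat p n ⊔ R) := by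
  rw [mem_dil, smul_mem_iff hR, PadicInt.norm_p_pow, zpow_le_zpow_iff_right₀ one_lt_p]
  omega

/-- The last coordinates of the integral vectors in `build R k v` form the ideal `p^m ℤ_p`, where
`m = max 0 (k + depth R v)`: the vector `c p^{-k} (v, p^k)` can be made integral modulo `R` if and
only if `c` is integral and `c p^{-k} v ∈ O^n + R`. -/
lemma proj_build_inf {R : Submodule ℤ_[p] (Fin n → ℚ_[p])} (hR : IsLattice R)
    (k : ℤ) (v : Fin n → ℚ_[p]) (c : ℚ_[p]) :
    (∃ y, app y c ∈ build R k v ⊓ stdLat p (n + 1)) ↔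
      ‖c‖ ≤ (p : ℝ) ^ (-(max 0 (k + depth R v))) := by
  have hc0 : ‖c‖ ≤ (p : ℝ) ^ (-(max 0 (k + depth R v))) ↔
      ‖c‖ ≤ 1 ∧ ‖c‖ ≤ (p : ℝ) ^ (-(k + depth R v)) := by
    have hp1 := one_lt_p (p := p)
    rcases le_total 0 (k + (depth R v : ℤ)) with h | h
    · rw [max_eq_right h]
      exact ⟨fun h' => ⟨h'.trans (zpow_le_one_of_nonpos₀ hp1.le (by omega)), h'⟩, fun h' => h'.2⟩
    · rw [max_eq_left h, neg_zero, zpow_zero]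
      exact ⟨fun h' => ⟨h', h'.trans (one_le_zpow₀ hp1.le (by omega))⟩, fun h' => h'.1⟩
  rw [hc0]
  have h1 := (norm_zpow_mul_le_iff (p := p) k 0 c)
  simp only [neg_zero, zpow_zero, add_zero] at h1
  constructor
  · rintro ⟨y, hy, hy'⟩
    rw [SetLike.mem_coe, mem_stdLat] at hy'
    rw [SetLike.mem_coe, mem_build] at hy
    have h2 := hy' (Fin.last n)
    rw [app_last] at h2
    refine ⟨h2, ?_⟩
    rw [← norm_zpow_mul_le_iff]
    have h3 := h1.2 hy.2
    refine (smul_mem_iff hR v ⟨_, h3⟩).1 ?_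
    change ((p : ℚ_[p]) ^ (-k) * c) • v ∈ _
    have h4 : y ∈ stdLat p n := mem_stdLat.2 fun i => by simpa using hy' i.castSucc
    have h5 := (stdLat p n ⊔ R).sub_mem (Submodule.mem_sup_left h4) (Submodule.mem_sup_right hy.1)
    simpa using h5
  · rintro ⟨h2, h3⟩
    rw [← norm_zpow_mul_le_iff] at h3
    have h4 : ‖(p : ℚ_[p]) ^ (-k) * c‖ ≤ 1 := h3.trans
      (zpow_le_one_of_nonpos₀ one_lt_p.le (by omega))
    have h5 := (smul_mem_iff hR v ⟨_, h4⟩).2 h3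
    change ((p : ℚ_[p]) ^ (-k) * c) • v ∈ _ at h5
    obtain ⟨y, hy, z, hz, hyz⟩ := Submodule.mem_sup.1 h5
    refine ⟨y, ?_, ?_⟩
    · rw [SetLike.mem_coe, mem_build]
      refine ⟨?_, h1.1 h4⟩
      rw [← hyz]
      simpa using R.neg_mem hz
    · rw [SetLike.mem_coe, mem_stdLat]
      intro i
      refine Fin.lastCases ?_ (fun i => ?_) i
      · simpa using h2
      · simpa using mem_stdLat.1 hy i

lemma first_inf (R : Submodule ℤ_[p] (Fin (n + 1) → ℚ_[p])) :
    first (R ⊓ stdLat p (n + 1)) = first R ⊓ stdLat p n := by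
  ext y
  rw [mem_first, Submodule.mem_inf, Submodule.mem_inf, mem_first, mem_stdLat, mem_stdLat,
    Fin.forall_fin_succ']
  simp

/-- Volume of a lattice as a real number. -/
def rv (R : Submodule ℤ_[p] (Fin n → ℚ_[p])) : ℝ := rvol (vol p n) R

lemma rv_pos {R : Submodule ℤ_[p] (Fin n → ℚ_[p])} (hR : IsLattice R) : 0 < rv R :=
  ENNReal.toReal_pos (vol_ne_zero hR) (vol_ne_top hR)

lemma rv_build {R : Submodule ℤ_[p] (Fin n → ℚ_[p])} (hR : IsLattice R) (k : ℤ)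
    (v : Fin n → ℚ_[p]) : rv (build R k v) = rv R * (p : ℝ) ^ (-k) := by
  have := p_pos (p := p)
  rw [rv, rvol, vol_succ (build_isLattice hR k v) k (proj_build R k v), first_build,
    ENNReal.toReal_mul, ENNReal.toReal_ofReal (by positivity)]
  rfl

lemma rv_build_inf {R : Submodule ℤ_[p] (Fin n → ℚ_[p])} (hR : IsLattice R) (k : ℤ)
    (v : Fin n → ℚ_[p]) : rv (build R k v ⊓ stdLat p (n + 1)) =
      rv (R ⊓ stdLat p n) * (p : ℝ) ^ (-(max 0 (k + depth R v))) := by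
  have := p_pos (p := p)
  rw [rv, rvol, vol_succ (inf_isLattice (build_isLattice hR k v) stdLat_isLattice) _
    (proj_build_inf hR k v), first_inf, first_build,
    ENNReal.toReal_mul, ENNReal.toReal_ofReal (by positivity)]
  rfl

lemma depth_congr {R : Submodule ℤ_[p] (Fin n → ℚ_[p])} {v w : Fin n → ℚ_[p]}
    (h : v - w ∈ R) : depth R v = depth R w := by
  unfold depth
  congr 1
  ext t
  rw [Set.mem_ofPred_eq, Set.mem_ofPred_eq, ← sub_add_cancel v w, smul_add,
    Submodule.add_mem_iff_right]
  exact Submodule.mem_sup_right (R.smul_mem _ h)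

/-- The number of classes `v` mod `R` with `depth R v ≤ s`. -/
lemma card_depth {R : Submodule ℤ_[p] (Fin n → ℚ_[p])} (hR : IsLattice R) (s : ℕ) :
    Finite {q : (Fin n → ℚ_[p]) ⧸ R // depth R q.out ≤ s} ∧
    (Nat.card {q : (Fin n → ℚ_[p]) ⧸ R // depth R q.out ≤ s} : ℝ) =
      ((p : ℝ) ^ n) ^ s / rv (R ⊓ stdLat p n) := by
  have hS := sup_isLattice stdLat_isLattice hR
  have hD := dil_isLattice hS s
  have e : ∀ q : (Fin n → ℚ_[p]) ⧸ R, depth R q.out ≤ s ↔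
      q ∈ (dil s (stdLat p n ⊔ R)).map R.mkQ := by
    intro q
    rw [depth_le_iff hR, Submodule.mem_map]
    constructor
    · intro h
      exact ⟨_, h, by simp⟩
    · rintro ⟨y, hy, rfl⟩
      rw [← depth_le_iff hR] at hy ⊢
      rwa [depth_congr (R := R) (w := y)]
      rw [← Submodule.Quotient.eq]
      simp
  have e2 : {q : (Fin n → ℚ_[p]) ⧸ R // depth R q.out ≤ s} ≃
    (dil s (stdLat p n ⊔ R)).map R.mkQ := Equiv.subtypeEquivRight e
  rw [Nat.card_congr e2]
  refine ⟨@Finite.of_equiv _ _ (finite_map_mkQ hD hR) e2.symm, ?_⟩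
  have h1 := vol_eq_card hD hR
  have h2 := vol_eq_card hS hR
  have h3 := vol_eq_card (stdLat_isLattice (p := p) (n := n)) hR
  have h4 : dil s (stdLat p n ⊔ R) ⊓ R = R := by
    refine inf_eq_right.2 fun x hx => ?_
    rw [mem_dil]
    exact Submodule.smul_mem _ _ (Submodule.mem_sup_right hx)
  have h5 : (stdLat p n ⊔ R).map R.mkQ = (stdLat p n).map R.mkQ := by
    rw [Submodule.map_sup]; simp
  rw [vol_dil hS, h4] at h1
  rw [h5, inf_eq_right.2 le_sup_right] at h2
  rw [h2] at h1
  rw [vol_stdLat, inf_comm] at h3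
  have h1' := congrArg ENNReal.toReal h1
  have h3' := congrArg ENNReal.toReal h3
  simp only [ENNReal.toReal_mul, ENNReal.toReal_pow, ENNReal.toReal_natCast,
    ENNReal.toReal_one] at h1' h3'
  have p1 := rv_pos hR
  have p2 := rv_pos (inf_isLattice hR (stdLat_isLattice (p := p) (n := n)))
  change _ * (_ * rv R) = _ * rv R at h1'
  change _ = _ * rv _ at h3'
  rw [eq_div_iff p2.ne']
  have h6 := mul_right_cancel₀ p1.ne' ((mul_assoc _ _ _).trans h1')
  rw [← h6, mul_assoc, ← h3', mul_one, ← pow_mul, ← pow_mul, mul_comm]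

/-! ### Geometric series -/

/-- Iterated summation, where the absolute convergence needed is checked fibrewise. -/
lemma hasSum_sigma_of_norm {ι : Type*} {κ : ι → Type*} {f : (Σ i, κ i) → ℂ} {g : ι → ℂ}
    {h : ι → ℝ} {a : ℂ} (hf : ∀ i, HasSum (fun k => f ⟨i, k⟩) (g i))
    (hn : ∀ i, HasSum (fun k => ‖f ⟨i, k⟩‖) (h i)) (hh : Summable h) (hg : HasSum g a) :
    HasSum f a := by
  refine HasSum.sigma_of_hasSum hg hf (Summable.of_norm ?_)
  rw [summable_sigma_of_nonneg fun _ => norm_nonneg _]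
  exact ⟨fun i => (hn i).summable, by simpa only [(hn _).tsum_eq] using hh⟩

lemma hasSum_of_eq {ι E : Type*} [AddCommMonoid E] [TopologicalSpace E] {f g : ι → E} {a b : E}
    (h : HasSum f a) (hf : ∀ i, g i = f i) (ha : b = a) : HasSum g b := by
  rw [ha, funext hf]; exact h

/-- The geometric series over `ℤ` governing the last coordinate. -/
lemma hasSum_int {x y : ℂ} (hx0 : x ≠ 0) (hx : ‖x‖ < 1) (hy : ‖y‖ < ‖x‖) :
    HasSum (fun m : ℤ => x ^ (-m) * y ^ (max 0 m)) ((1 - y) / ((1 - x) * (1 - y / x))) := by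
  have hy' : ‖y / x‖ < 1 := by
    rw [norm_div, div_lt_one (norm_pos_iff.2 hx0)]
    exact hy
  have n1 : 1 - x ≠ 0 := fun h => by
    rw [← sub_eq_zero.1 h] at hx; simp at hx
  have n2 : 1 - y / x ≠ 0 := fun h => by
    rw [← sub_eq_zero.1 h] at hy'; simp at hy'
  have h1 := hasSum_geometric_of_norm_lt_one hy'
  have h2 := (hasSum_geometric_of_norm_lt_one hx).mul_left x
  have h3 := HasSum.of_nat_of_neg_add_one (f := fun m : ℤ => x ^ (-m) * y ^ (max 0 m))
    (m := (1 - y / x)⁻¹) (m' := x * (1 - x)⁻¹) ?_ ?_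
  · refine hasSum_of_eq h3 (fun _ => rfl) ?_
    have n3 : x - y ≠ 0 := fun h => n2 (by rw [← sub_eq_zero.1 h, div_self hx0, sub_self])
    have n4 : 1 - y / x = (x - y) / x := by field_simp
    rw [n4]
    field_simp
    ring
  · refine hasSum_of_eq h1 (fun m => ?_) rfl
    rw [max_eq_right (by positivity), zpow_neg, zpow_natCast, zpow_natCast, div_pow]
    field_simp
  · refine hasSum_of_eq h2 (fun m => ?_) rfl
    rw [max_eq_left (by omega), neg_neg, zpow_zero, mul_one, ← pow_succ']
    norm_cast

/-- If `N * P ^ s` elements have height at most `s` for each `s`, the generating function of the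
height is `N (1 - x) / (1 - P x)`. -/
lemma hasSum_height {Q : Type*} (d : Q → ℕ) (N P : ℝ) (hP : 1 ≤ P)
    (hfin : ∀ s, Finite {q // d q ≤ s}) (hcard : ∀ s, (Nat.card {q // d q ≤ s} : ℝ) = P ^ s * N)
    {x : ℂ} (hx : P * ‖x‖ < 1) :
    HasSum (fun q => x ^ d q) (N * ((1 - x) / (1 - P * x))) := by
  have hfin' : ∀ s, Finite {q // d q = s} := fun s =>
    Finite.of_injective (fun q : {q // d q = s} => (⟨q.1, q.2.le⟩ : {q // d q ≤ s}))
      fun a b h => Subtype.ext (by simpa using h)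
  have hc0 : (Nat.card {q // d q = 0} : ℝ) = N := by
    have := hcard 0
    simp only [Nat.le_zero, pow_zero, one_mul] at this
    exact this
  have hcs : ∀ s, (Nat.card {q // d q = s + 1} : ℝ) = P ^ s * ((P - 1) * N) := by
    intro s
    have h1 : {q | d q ≤ s + 1} = {q | d q ≤ s} ∪ {q | d q = s + 1} := by
      ext q; simp only [Set.mem_ofPred_eq, Set.mem_union]; omega
    have h2 := Set.ncard_union_eq (s := {q | d q ≤ s}) (t := {q | d q = s + 1})
      (Set.disjoint_left.2 fun q hq hq' => by
        simp only [Set.mem_ofPred_eq] at hq hq'; omega) (hfin s) (hfin' _)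
    rw [← h1] at h2
    have h3 : (Nat.card {q // d q ≤ s + 1} : ℝ) =
      Nat.card {q // d q ≤ s} + Nat.card {q // d q = s + 1} := by exact_mod_cast h2
    rw [hcard, hcard] at h3
    linear_combination -h3
  -- the sum over the fibres of `d`, for any base of small modulus
  have key : ∀ z : ℂ, P * ‖z‖ < 1 → HasSum (fun s => (Nat.card {q // d q = s} : ℂ) * z ^ s)
      (N * ((1 - z) / (1 - P * z))) := by
    intro z hz
    have hz' : ‖(P : ℂ) * z‖ < 1 := by
      rw [norm_mul, Complex.norm_real, Real.norm_of_nonneg (by linarith)]; exact hz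
    have n1 : 1 - (P : ℂ) * z ≠ 0 := fun h => by
      rw [← sub_eq_zero.1 h] at hz'; simp at hz'
    rw [← hasSum_nat_add_iff' 1]
    have h2 := (hasSum_geometric_of_norm_lt_one hz').mul_left (((P : ℂ) - 1) * N * z)
    refine hasSum_of_eq h2 (fun s => ?_) ?_
    · have := congrArg (fun r : ℝ => (r : ℂ)) (hcs s)
      push_cast at this
      rw [this]
      ring
    · have := congrArg (fun r : ℝ => (r : ℂ)) hc0
      push_cast at this
      rw [Finset.sum_range_one, this]
      linear_combination (N : ℂ) * mul_inv_cancel₀ n1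
  have keyR : Summable fun s => (Nat.card {q // d q = s} : ℝ) * ‖x‖ ^ s := by
    have := (key ‖x‖ (by simpa using hx)).summable
    exact_mod_cast this
  rw [← (Equiv.sigmaFiberEquiv d).hasSum_iff]
  refine hasSum_sigma_of_norm (fun s => ?_) (fun s => ?_) keyR (key x hx)
  · have := hfin' s
    have := Fintype.ofFinite {q // d q = s}
    refine hasSum_of_eq (hasSum_fintype _) (fun _ => rfl) ?_
    rw [Finset.sum_congr rfl (g := fun _ => x ^ s)
      fun q _ => by simp [Equiv.sigmaFiberEquiv, q.2]]
    simp
  · have := hfin' s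
    have := Fintype.ofFinite {q // d q = s}
    refine hasSum_of_eq (hasSum_fintype _) (fun _ => rfl) ?_
    rw [Finset.sum_congr rfl (g := fun _ => ‖x‖ ^ s)
      fun q _ => by simp [Equiv.sigmaFiberEquiv, q.2]]
    simp

lemma hasSum_mul {ι κ : Type*} {f : ι → ℂ} {g : κ → ℂ} {a b : ℂ} (hf : HasSum f a)
    (hg : HasSum g b) : HasSum (fun x : ι × κ => f x.1 * g x.2) (a * b) := by
  have h := summable_mul_of_summable_norm (f := f) (g := g) hf.summable.norm hg.summable.norm
  exact hf.mul hg h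

/-- The sum over `k` and `q` factors after the substitution `m = k + d q`. -/
lemma hasSum_int_prod {Q : Type*} (d : Q → ℕ) (N P : ℝ) (hP : 1 ≤ P)
    (hfin : ∀ s, Finite {q // d q ≤ s}) (hcard : ∀ s, (Nat.card {q // d q ≤ s} : ℝ) = P ^ s * N)
    {x y : ℂ} (hx0 : x ≠ 0) (hx : P * ‖x‖ < 1) (hy : ‖y‖ < ‖x‖) :
    HasSum (fun kq : ℤ × Q => x ^ (-kq.1) * y ^ (max 0 (kq.1 + d kq.2)))
      ((1 - y) / ((1 - P * x) * (1 - y / x)) * N) := by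
  have hx1 : ‖x‖ < 1 := lt_of_le_of_lt (le_mul_of_one_le_left (norm_nonneg _) hP) hx
  have n1 : 1 - x ≠ 0 := fun h => by
    rw [← sub_eq_zero.1 h] at hx1; simp at hx1
  have h1 := hasSum_int hx0 hx1 hy
  have h2 := hasSum_height d N P hP hfin hcard hx
  have h3 := hasSum_mul h1 h2
  -- shear the index set, replacing `k` by `m = k + d q`
  let e : ℤ × Q ≃ ℤ × Q :=
    { toFun := fun kq => (kq.1 + d kq.2, kq.2)
      invFun := fun kq => (kq.1 - d kq.2, kq.2)
      left_inv := fun kq => by simp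
      right_inv := fun kq => by simp }
  rw [← e.hasSum_iff] at h3
  refine hasSum_of_eq h3 ?_ ?_
  · rintro ⟨k, q⟩
    simp only [Function.comp, e, Equiv.coe_fn_mk]
    rw [mul_right_comm, ← zpow_natCast, ← zpow_add₀ hx0]
    congr 2
    ring
  · simp only [div_eq_mul_inv, mul_inv]
    linear_combination (-(1 - y) * (1 - P * x)⁻¹ * (1 - y * x⁻¹)⁻¹ * N) * mul_inv_cancel₀ n1

/-- The sum over all lattices in `K^{n+1}` that meet `K^n` in a given lattice `R`. -/
lemma hasSum_fibre {R : Submodule ℤ_[p] (Fin n → ℚ_[p])} (hR : IsLattice R) {x y : ℂ}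
    (hx0 : x ≠ 0) (hx : (p : ℝ) ^ n * ‖x‖ < 1) (hy : ‖y‖ < ‖x‖) :
    HasSum (fun kq : ℤ × ((Fin n → ℚ_[p]) ⧸ R) =>
      x ^ (-kq.1) * y ^ (max 0 (kq.1 + depth R kq.2.out)))
      ((1 - y) / ((1 - (p : ℂ) ^ n * x) * (1 - y / x)) * (rv (R ⊓ stdLat p n) : ℂ)⁻¹) := by
  have h := hasSum_int_prod (fun q : (Fin n → ℚ_[p]) ⧸ R => depth R q.out)
    (rv (R ⊓ stdLat p n))⁻¹ ((p : ℝ) ^ n) (one_le_pow₀ (one_lt_p (p := p)).le)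
    (fun s => (card_depth hR s).1)
    (fun s => by rw [(card_depth hR s).2, div_eq_mul_inv]) hx0 hx hy
  push_cast at h
  exact h

/-! ### The parametrization of lattices -/

/-- The set `Lat_n` of lattices in `ℚ_p^n`. -/
abbrev Lat (p n : ℕ) [Fact p.Prime] : Type :=
  {R : Submodule ℤ_[p] (Fin n → ℚ_[p]) // IsLattice R}

/-- The data `(R, k, v mod R)` parametrizing the lattices in `ℚ_p^{n+1}`. -/
def latEquiv (p n : ℕ) [Fact p.Prime] :
    (Σ R : Lat p n, ℤ × ((Fin n → ℚ_[p]) ⧸ R.1)) ≃ Lat p (n + 1) :=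
  Equiv.ofBijective (fun x => ⟨build x.1.1 x.2.1 x.2.2.out, build_isLattice x.1.2 _ _⟩) <| by
    constructor
    · rintro ⟨⟨R, hR⟩, k, q⟩ ⟨⟨R', hR'⟩, k', q'⟩ h
      obtain ⟨h1, h2, h3⟩ := build_inj (congrArg Subtype.val h)
      dsimp only at h1 h2 h3
      subst h1 h2
      rw [← Submodule.Quotient.eq] at h3
      simp only [Submodule.Quotient.mk_out] at h3
      rw [h3]
    · rintro ⟨R, hR⟩
      obtain ⟨k, v, h⟩ := build_surj hR
      refine ⟨⟨⟨first R, first_isLattice hR⟩, k, Submodule.Quotient.mk v⟩, Subtype.ext ?_⟩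
      refine (build_congr ?_).trans h.symm
      rw [← Submodule.Quotient.eq, Submodule.Quotient.mk_out]

lemma latEquiv_apply (R : Lat p n) (k : ℤ) (q : (Fin n → ℚ_[p]) ⧸ R.1) :
    (latEquiv p n ⟨R, k, q⟩).1 = build R.1 k q.out := rfl

/-! ### The summand and the induction -/

/-- The volume of `R ∩ K^j`, computed in `K^j`. -/
def rvj (R : Submodule ℤ_[p] (Fin n → ℚ_[p])) (j : ℕ) : ℝ :=
  rvol (vol p j) (restrictSet p j (R : Set (Fin n → ℚ_[p])))

lemma rvj_self (R : Submodule ℤ_[p] (Fin n → ℚ_[p])) : rvj R n = rv R := by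
  unfold rvj rv
  congr 1
  ext y
  simp [restrictSet]

/-- Restricting to `K^j` with `j ≤ n` can be done after restricting to `K^n`. -/
lemma rvj_first (R : Submodule ℤ_[p] (Fin (n + 1) → ℚ_[p])) {j : ℕ} (hj : j ≤ n) :
    rvj R j = rvj (first R) j := by
  unfold rvj
  congr 1
  ext y
  simp only [restrictSet, Set.mem_ofPred_eq, SetLike.mem_coe, mem_first]
  have : (fun i : Fin (n + 1) => if h : (i : ℕ) < j then y ⟨i, h⟩ else 0) =
      app (fun i : Fin n => if h : (i : ℕ) < j then y ⟨i, h⟩ else 0) 0 := by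
    ext i
    refine Fin.lastCases ?_ (fun i => ?_) i
    · simp [hj.not_gt]
    · simp
  rw [this]

lemma rvj_pos {R : Submodule ℤ_[p] (Fin n → ℚ_[p])} (hR : IsLattice R) {j : ℕ} (hj : j ≤ n) :
    0 < rvj R j := by
  induction n with
  | zero =>
    obtain rfl : j = 0 := by omega
    rw [rvj_self]
    exact rv_pos hR
  | succ n ih =>
    rcases hj.lt_or_eq with h | rfl
    · rw [rvj_first R (by omega)]
      exact ih (first_isLattice hR) (by omega)
    · rw [rvj_self]
      exact rv_pos hR

lemma rvj_zero (R : Submodule ℤ_[p] (Fin n → ℚ_[p])) : rvj R 0 = 1 := by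
  induction n with
  | zero =>
    rw [rvj_self, Subsingleton.elim R (stdLat p 0), rv, rvol, vol_stdLat, ENNReal.toReal_one]
  | succ n ih => rw [rvj_first R (by omega), ih]

/-- Multiplicative summation by parts; the boundary term at `n` is kept on the left. -/
lemma prod_cpow_sub (V : ℕ → ℝ) (b : ℕ → ℂ) (n : ℕ) (h0 : V 0 = 1) (hV : ∀ j ≤ n, 0 < V j) :
    (∏ j ∈ Finset.Icc 1 n, (V j : ℂ) ^ (b j - b (j + 1))) * (V n : ℂ) ^ b (n + 1) =
      ∏ j ∈ Finset.Icc 1 n, ((V j / V (j - 1) : ℝ) : ℂ) ^ b j := by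
  induction n with
  | zero => simp [h0]
  | succ n ih =>
    have h1 := hV n (by omega)
    have h2 := hV (n + 1) le_rfl
    rw [Finset.prod_Icc_succ_top (by omega), Finset.prod_Icc_succ_top (by omega),
      ← ih fun j hj => hV j (by omega), mul_assoc, mul_assoc,
      ← Complex.cpow_add _ _ (by exact_mod_cast h2.ne'), sub_add_cancel, Nat.add_sub_cancel,
      ← Complex.mul_cpow_ofReal_nonneg h1.le (by positivity), ← Complex.ofReal_mul,
      mul_div_cancel₀ _ h1.ne']

/-- The summand of the series in the form it has after summation by parts: the exponents `β_j` and
`α_j` go with the quotients of consecutive volumes, so that no condition at `n + 1` is involved. -/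
def term (α β : ℕ → ℂ) (R : Submodule ℤ_[p] (Fin n → ℚ_[p])) : ℂ :=
  ∏ j ∈ Finset.Icc 1 n, (((rvj R j / rvj R (j - 1) : ℝ) : ℂ) ^ β j *
    ((rvj (R ⊓ stdLat p n) j / rvj (R ⊓ stdLat p n) (j - 1) : ℝ) : ℂ) ^ α j)

lemma term_eq {α β : ℕ → ℂ} (hα : α (n + 1) = 0) (hβ : β (n + 1) = 0)
    {R : Submodule ℤ_[p] (Fin n → ℚ_[p])} (hR : IsLattice R) :
    ∏ j ∈ Finset.Icc 1 n, ((rvj R j : ℂ) ^ (β j - β (j + 1)) *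
      (rvj (R ⊓ stdLat p n) j : ℂ) ^ (α j - α (j + 1))) = term α β R := by
  have h1 := prod_cpow_sub (rvj R) β n (rvj_zero _) fun j => rvj_pos hR
  have h2 := prod_cpow_sub (rvj (R ⊓ stdLat p n)) α n (rvj_zero _)
    fun j => rvj_pos (inf_isLattice hR stdLat_isLattice)
  rw [hβ, Complex.cpow_zero, mul_one] at h1
  rw [hα, Complex.cpow_zero, mul_one] at h2
  rw [term, Finset.prod_mul_distrib, Finset.prod_mul_distrib, h1, h2]

/-- Complex powers of integral powers of `p`; no branch problem occurs because `p` is positive. -/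
lemma zpow_cpow (m : ℤ) (b : ℂ) : (((p : ℝ) ^ m : ℝ) : ℂ) ^ b = ((p : ℂ) ^ b) ^ m := by
  have h := p_pos (p := p)
  have h' : (((p : ℝ) ^ m : ℝ) : ℂ) ≠ 0 := by exact_mod_cast (zpow_pos h m).ne'
  rw [← Complex.cpow_int_mul, Complex.cpow_def_of_ne_zero h',
    Complex.cpow_def_of_ne_zero (by exact_mod_cast h.ne'), ← Complex.ofReal_log (by positivity),
    Real.log_zpow, ← Complex.ofReal_natCast, ← Complex.ofReal_log h.le]
  congr 1
  push_cast
  ring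

/-- The summand of `build R k v` is that of `R`, times the contribution of the last coordinate. -/
lemma term_build (α β : ℕ → ℂ) {R : Submodule ℤ_[p] (Fin n → ℚ_[p])} (hR : IsLattice R)
    (k : ℤ) (v : Fin n → ℚ_[p]) : term α β (build R k v) = term α β R *
      (((p : ℂ) ^ β (n + 1)) ^ (-k) *
        ((p : ℂ) ^ (-α (n + 1))) ^ (max 0 (k + depth R v))) := by
  have h1 := rv_pos hR
  have h2 := rv_pos (inf_isLattice hR (stdLat_isLattice (p := p) (n := n)))
  have e1 : ∀ j ≤ n, rvj (build R k v) j = rvj R j := fun j hj => by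
    rw [rvj_first _ hj, first_build]
  have e2 : ∀ j ≤ n, rvj (build R k v ⊓ stdLat p (n + 1)) j = rvj (R ⊓ stdLat p n) j :=
    fun j hj => by rw [rvj_first _ hj, first_inf, first_build]
  rw [term, Finset.prod_Icc_succ_top (by omega)]
  congr 1
  · refine Finset.prod_congr rfl fun j hj => ?_
    rw [Finset.mem_Icc] at hj
    rw [e1 _ hj.2, e2 _ hj.2, e1 (j - 1) (by omega), e2 (j - 1) (by omega)]
  · rw [Nat.add_sub_cancel, e1 n le_rfl, e2 n le_rfl, rvj_self, rvj_self, rvj_self, rvj_self,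
      rv_build hR, rv_build_inf hR, mul_div_cancel_left₀ _ h1.ne', mul_div_cancel_left₀ _ h2.ne',
      zpow_cpow, zpow_cpow, Complex.cpow_neg, inv_zpow, zpow_neg _ (max _ _)]

/-- Division by `vol (R ∩ O^n)` shifts every `α_j` by one. -/
lemma term_shift (α β : ℕ → ℂ) {R : Submodule ℤ_[p] (Fin n → ℚ_[p])} (hR : IsLattice R) :
    term α β R * (rv (R ⊓ stdLat p n) : ℂ)⁻¹ = term (fun j => α j - 1) β R := by
  have hRO := inf_isLattice hR (stdLat_isLattice (p := p) (n := n))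
  have h := prod_cpow_sub (rvj (R ⊓ stdLat p n)) (fun _ => -1) n (rvj_zero _)
    fun j => rvj_pos hRO
  simp only [sub_self, Complex.cpow_zero, Finset.prod_const_one, one_mul] at h
  rw [rvj_self, Complex.cpow_neg_one] at h
  rw [h, term, ← Finset.prod_mul_distrib, term]
  refine Finset.prod_congr rfl fun j hj => ?_
  rw [Finset.mem_Icc] at hj
  have h1 := rvj_pos hRO hj.2
  have h2 := rvj_pos hRO (j := j - 1) (by omega)
  rw [mul_assoc, ← Complex.cpow_add _ _ (by exact_mod_cast (div_pos h1 h2).ne'), sub_eq_add_neg]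

/-- The value of the series, as a product. -/
def betaProd (p n : ℕ) (α β : ℕ → ℂ) : ℂ :=
  ∏ j ∈ Finset.Icc 1 n, (1 - (p : ℂ) ^ (-(α j - n + j))) /
    ((1 - (p : ℂ) ^ (β j + j - 1)) * (1 - (p : ℂ) ^ (-(α j + β j - n + j))))

/-- Induction on `n`: the sum over the lattices with given intersection `R` with `ℚ_p^n` is a constant
times `term α β R / vol (R ∩ O^n)`, that is `term (α - 1) β R`, and the induction hypothesis for
`α - 1` and `β` applies. The same computation with `‖x‖` and `‖y‖` gives absolute convergence. -/
lemma hasSum_term : ∀ (n : ℕ) (α β : ℕ → ℂ), (∀ j ∈ Finset.Icc 1 n, (β j).re + j - 1 < 0) →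
    (∀ j ∈ Finset.Icc 1 n, (α j).re + (β j).re - n + j > 0) →
    HasSum (fun R : Lat p n => term α β R.1) (betaProd p n α β) := by
  intro n
  induction n with
  | zero =>
    intro α β _ _
    have : Unique (Lat p 0) := ⟨⟨⟨stdLat p 0, stdLat_isLattice⟩⟩, fun R =>
      Subtype.ext (Subsingleton.elim _ _)⟩
    refine hasSum_of_eq (hasSum_unique _) (fun _ => rfl) ?_
    simp [betaProd, term]
  | succ n ih =>
    intro α β hβ hαβ
    have hp1 := one_lt_p (p := p)
    have hp0 := p_pos (p := p)
    have hpC : (p : ℂ) ≠ 0 := by exact_mod_cast hp0.ne'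
    have hn : n + 1 ∈ Finset.Icc 1 (n + 1) := Finset.mem_Icc.2 ⟨by omega, le_rfl⟩
    have IH := ih (fun j => α j - 1) β
      (fun j hj => hβ j (Finset.Icc_subset_Icc_right (Nat.le_succ n) hj)) (fun j hj => by
        have := hαβ j (Finset.Icc_subset_Icc_right (Nat.le_succ n) hj)
        push_cast at this
        rw [Complex.sub_re, Complex.one_re]
        linarith)
    have cβ := hβ _ hn
    have cα := hαβ _ hn
    push_cast at cβ cα
    -- a lattice over `R` with data `(k, v)` contributes `x ^ (-k) * y ^ max 0 (k + depth R v)`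
    set x := (p : ℂ) ^ β (n + 1) with hx
    set y := (p : ℂ) ^ (-α (n + 1)) with hy
    have nx : ‖x‖ = (p : ℝ) ^ (β (n + 1)).re :=
      Complex.norm_natCast_cpow_of_pos hp.out.pos _
    have ny : ‖y‖ = (p : ℝ) ^ (-α (n + 1)).re :=
      Complex.norm_natCast_cpow_of_pos hp.out.pos _
    have x0 : x ≠ 0 := by
      rw [← norm_pos_iff, nx]; positivity
    have hxn : (p : ℝ) ^ n * ‖x‖ < 1 := by
      rw [nx, ← Real.rpow_natCast, ← Real.rpow_add hp0]
      exact Real.rpow_lt_one_of_one_lt_of_neg hp1 (by linarith)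
    have hxy : ‖y‖ < ‖x‖ := by
      rw [nx, ny]
      refine Real.rpow_lt_rpow_of_exponent_lt hp1 ?_
      rw [Complex.neg_re]
      linarith
    rw [← (latEquiv p n).hasSum_iff]
    have hT : ∀ z : (Σ R : Lat p n, ℤ × ((Fin n → ℚ_[p]) ⧸ R.1)),
        ((fun R : Lat p (n + 1) => term α β R.1) ∘ latEquiv p n) z = term α β z.1.1 *
          (x ^ (-z.2.1) * y ^ (max 0 (z.2.1 + depth z.1.1 z.2.2.out))) := fun z =>
      term_build α β z.1.2 _ _
    refine hasSum_of_eq (g := ((fun R : Lat p (n + 1) => term α β R.1) ∘ latEquiv p n))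
      (hasSum_sigma_of_norm (fun R => ?_) (fun R => ?_) (IH.summable.norm.mul_left
      ((1 - ‖y‖) / ((1 - (p : ℝ) ^ n * ‖x‖) * (1 - ‖y‖ / ‖x‖)))) (IH.mul_left
      ((1 - y) / ((1 - (p : ℂ) ^ n * x) * (1 - y / x))))) hT ?_
    · refine hasSum_of_eq ((hasSum_fibre R.2 x0 hxn hxy).mul_left (term α β R.1))
        (fun _ => rfl) ?_
      rw [← term_shift α β R.2]
      ring
    · have h := hasSum_fibre R.2 (x := (‖x‖ : ℂ)) (y := (‖y‖ : ℂ)) (by simpa using x0)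
        (by simpa using hxn) (by simpa using hxy)
      have h' : HasSum (fun kq : ℤ × ((Fin n → ℚ_[p]) ⧸ R.1) =>
          ‖x‖ ^ (-kq.1) * ‖y‖ ^ (max 0 (kq.1 + (depth R.1 kq.2.out : ℤ))))
          ((1 - ‖y‖) / ((1 - (p : ℝ) ^ n * ‖x‖) * (1 - ‖y‖ / ‖x‖)) *
            (rv (R.1 ⊓ stdLat p n))⁻¹) := by
        rw [← Complex.hasSum_ofReal]
        refine hasSum_of_eq h (fun _ => ?_) ?_ <;> push_cast <;> rfl
      have hW := rv_pos (inf_isLattice R.2 (stdLat_isLattice (p := p) (n := n)))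
      refine hasSum_of_eq (h'.mul_left ‖term α β R.1‖) (fun kq => ?_) ?_
      · rw [norm_mul, norm_mul, norm_zpow, norm_zpow]
      · rw [← term_shift α β R.2, norm_mul, norm_inv, Complex.norm_real,
          Real.norm_of_nonneg hW.le]
        ring
    · rw [betaProd, Finset.prod_Icc_succ_top (by omega), mul_comm]
      congr 1
      · have e1 : (p : ℂ) ^ (-(α (n + 1) - (n + 1 : ℕ) + (n + 1 : ℕ))) = y := by
          rw [sub_add_cancel]
        have e2 : (p : ℂ) ^ (β (n + 1) + (n + 1 : ℕ) - 1) = (p : ℂ) ^ n * x := by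
          rw [hx, ← Complex.cpow_natCast, ← Complex.cpow_add _ _ hpC]
          push_cast
          congr 1
          ring
        have e3 : (p : ℂ) ^ (-(α (n + 1) + β (n + 1) - (n + 1 : ℕ) + (n + 1 : ℕ))) = y / x := by
          rw [hx, hy, ← Complex.cpow_sub _ _ hpC]
          congr 1
          ring
        rw [e1, e2, e3]
      · rw [betaProd]
        refine Finset.prod_congr rfl fun j _ => ?_
        congr 3
        · congr 2
          push_cast
          ring
        · congr 2
          push_cast
          ring

end BuildingBeta

/-- The beta-function of the Bruhat–Tits building of `GL_n(ℚ_p)` (Theorem 2.1):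
`Σ_{R ∈ Lat_n} Π_j vol(R ∩ K^j)^{β_j-β_{j+1}} vol(R ∩ O^j)^{α_j-α_{j+1}}`
equals `Π_j (1-p^{-(α_j-n+j)}) / ((1-p^{β_j+j-1})(1-p^{-(α_j+β_j-n+j)}))`. -/
theorem beta_function_of_building (p n : ℕ) [Fact p.Prime]
    (μ : ∀ j : ℕ, Measure (Fin j → ℚ_[p]))
    (hinv : ∀ j, (μ j).IsAddLeftInvariant)
    (hnorm : ∀ j, μ j ↑(stdLat p j) = 1)
    (α β : ℕ → ℂ) (hα : α (n + 1) = 0) (hβ : β (n + 1) = 0)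
    (hβre : ∀ j ∈ Finset.Icc 1 n, (β j).re + j - 1 < 0)
    (hαβre : ∀ j ∈ Finset.Icc 1 n, (α j).re + (β j).re - n + j > 0) :
    HasSum
      (fun R : {R : Submodule ℤ_[p] (Fin n → ℚ_[p]) // IsLattice R} =>
        ∏ j ∈ Finset.Icc 1 n,
          (((rvol (μ j) (restrictSet p j (R.1 : Set (Fin n → ℚ_[p]))) : ℝ) : ℂ)
              ^ (β j - β (j + 1)) *
           ((rvol (μ j) (restrictSet p j ((R.1 ⊓ stdLat p n :
                Submodule ℤ_[p] (Fin n → ℚ_[p])) : Set (Fin n → ℚ_[p]))) : ℝ) : ℂ)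
              ^ (α j - α (j + 1))))
      (∏ j ∈ Finset.Icc 1 n,
        (1 - (p : ℂ) ^ (-(α j - n + j))) /
          ((1 - (p : ℂ) ^ (β j + j - 1)) *
           (1 - (p : ℂ) ^ (-(α j + β j - n + j))))) := by
  obtain rfl : μ = fun j => BuildingBeta.vol p j := funext fun j =>
    haveI := hinv j
    BuildingBeta.eq_pi_lam (μ j) (hnorm j)
  exact BuildingBeta.hasSum_of_eq (BuildingBeta.hasSum_term n α β hβre hαβre)
    (fun R => BuildingBeta.term_eq hα hβ R.2) rfl
end
end
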